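/- arXiv:gr-qc/9812061 — 5 statements merged into one kernel-verified Lean document; each statement's English description precedes it below -/
import Mathlib

section
/- Let Φ : ℝ² → [0,∞) be measurable. Suppose U ∈ C¹((0,∞)) satisfies U'(r) = (4π/r²) ∫₀^r s² ρ(s) ds for all r > 0, where ρ(r) = (2π/r²) ∫_{U(r)}^∞ ∫₀^{2r²(E−U(r))} Φ(E,L) (2(E − U(r) − L/(2r²)))^{−1/2} dL dE. If the total mass M = 4π ∫₀^∞ r² ρ(r) dr is finite, then the limit U_∞ = lim_{r→∞} U(r) exists and is finite, and Φ(E,L) = 0 for almost every (E,L) with E > U_∞ and L > 0. -/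
open MeasureTheory Real Set Filter
open scoped ENNReal

/-- The spatial mass density induced by the ansatz `f(x,v) = Φ(E,L)` for the
spherically symmetric Vlasov-Poisson system, expressed as a double integral. -/
noncomputable def rhoVP (Φ : ℝ × ℝ → ℝ) (U : ℝ → ℝ) (r : ℝ) : ℝ≥0∞ :=
  ENNReal.ofReal (2 * π / r ^ 2) *
    ∫⁻ E in Ioi (U r), ∫⁻ L in Ioo (0 : ℝ) (2 * r ^ 2 * (E - U r)),
      ENNReal.ofReal (Φ (E, L) / Real.sqrt (2 * (E - U r - L / (2 * r ^ 2))))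

/-- A function on `(0, ∞)` whose derivative lies between `0` and `C / r ^ 2` is monotone
and bounded by its finite limit at infinity. -/
lemma exists_tendsto_of_hasDerivAt_le_div_sq {U U' : ℝ → ℝ} {C : ℝ}
    (hU : ∀ r ∈ Ioi (0 : ℝ), HasDerivAt U (U' r) r)
    (hnonneg : ∀ r ∈ Ioi (0 : ℝ), 0 ≤ U' r) (hle : ∀ r ∈ Ioi (0 : ℝ), U' r ≤ C / r ^ 2) :
    ∃ l : ℝ, Tendsto U atTop (nhds l) ∧ MonotoneOn U (Ioi 0) ∧ ∀ r ∈ Ioi (0 : ℝ), U r ≤ l := by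
  have hmono : MonotoneOn U (Ioi 0) := by
    refine monotoneOn_of_deriv_nonneg (convex_Ioi 0)
      (fun r hr => (hU r hr).continuousAt.continuousWithinAt) ?_ ?_
    · rw [interior_Ioi]
      exact fun r hr => (hU r hr).differentiableAt.differentiableWithinAt
    · rw [interior_Ioi]
      intro r hr
      rw [(hU r hr).deriv]
      exact hnonneg r hr
  have hderiv : ∀ r ∈ Ioi (0 : ℝ),
      HasDerivAt (fun x => U x + C * x⁻¹) (U' r + C * (-(r ^ 2)⁻¹)) r := fun r hr =>
    (hU r hr).add ((hasDerivAt_inv (ne_of_gt hr)).const_mul C)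
  have hanti : AntitoneOn (fun x => U x + C * x⁻¹) (Ioi 0) := by
    refine antitoneOn_of_deriv_nonpos (convex_Ioi 0)
      (fun r hr => (hderiv r hr).continuousAt.continuousWithinAt) ?_ ?_
    · rw [interior_Ioi]
      exact fun r hr => (hderiv r hr).differentiableAt.differentiableWithinAt
    · rw [interior_Ioi]
      intro r hr
      rw [(hderiv r hr).deriv]
      have := hle r hr
      rw [div_eq_mul_inv] at this
      linarith
  have hC : 0 ≤ C := by
    have h1 := (hnonneg 1 (mem_Ioi.2 one_pos)).trans (hle 1 (mem_Ioi.2 one_pos))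
    simpa using h1
  have hbound : ∀ r, U (max r 1) ≤ U 1 + C := by
    intro r
    have hr : (0 : ℝ) < max r 1 := lt_max_of_lt_right one_pos
    have h1 := hanti (mem_Ioi.2 one_pos) (mem_Ioi.2 hr) (le_max_right r 1)
    have h2 : 0 ≤ C * (max r 1)⁻¹ := by positivity
    simp only [inv_one, mul_one] at h1
    linarith
  have hmono' : Monotone fun r => U (max r 1) := fun a b hab =>
    hmono (mem_Ioi.2 (lt_max_of_lt_right one_pos)) (mem_Ioi.2 (lt_max_of_lt_right one_pos))
      (max_le_max_right 1 hab)
  have hbdd : BddAbove (range fun r => U (max r 1)) :=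
    ⟨U 1 + C, by rintro _ ⟨r, rfl⟩; exact hbound r⟩
  have hlim : Tendsto U atTop (nhds (⨆ r, U (max r 1))) := by
    refine (tendsto_atTop_ciSup hmono' hbdd).congr' ?_
    filter_upwards [eventually_ge_atTop 1] with r hr
    rw [max_eq_left hr]
  refine ⟨_, hlim, hmono, fun r hr => ?_⟩
  refine ge_of_tendsto hlim ?_
  filter_upwards [eventually_ge_atTop r] with s hs
  exact hmono hr (mem_Ioi.2 (lt_of_lt_of_le hr hs)) hs

/-- A constant lower bound on a half-line of a function with finite integral vanishes. -/
lemma eq_zero_of_le_of_setLIntegral_Ioi_ne_top {f : ℝ → ℝ≥0∞} {c : ℝ≥0∞} {R : ℝ}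
    (hf : ∫⁻ r in Ioi R, f r ≠ ⊤) (hc : ∀ r ∈ Ioi R, c ≤ f r) : c = 0 := by
  by_contra h
  have h1 : ∫⁻ _ in Ioi R, c ≤ ∫⁻ r in Ioi R, f r := setLIntegral_mono' measurableSet_Ioi hc
  rw [setLIntegral_const, Real.volume_Ioi, ENNReal.mul_top h] at h1
  exact hf (top_le_iff.1 h1)

/-- Lower bound for `r ^ 2 * ρ(r)` by an integral over a region not depending on `r`. -/
lemma le_sq_mul_rhoVP {Φ : ℝ × ℝ → ℝ} (hΦ : ∀ p, 0 ≤ Φ p) {U : ℝ → ℝ} {a l R r : ℝ}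
    (hR : 0 < R) (hr : R ≤ r) (ha : a ≤ U r) (hl : U r ≤ l) :
    ENNReal.ofReal (2 * π) * ∫⁻ E, ∫⁻ L,
      {p : ℝ × ℝ | l < p.1 ∧ 0 < p.2 ∧ p.2 < 2 * R ^ 2 * (p.1 - l)}.indicator
        (fun p => ENNReal.ofReal (Φ p / √(2 * (p.1 - a)))) (E, L) ≤
      ENNReal.ofReal (r ^ 2) * rhoVP Φ U r := by
  have hr0 : 0 < r := hR.trans_le hr
  have hconst : ENNReal.ofReal (r ^ 2) * ENNReal.ofReal (2 * π / r ^ 2) =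
      ENNReal.ofReal (2 * π) := by
    rw [← ENNReal.ofReal_mul (by positivity)]
    congr 1
    field_simp
  rw [rhoVP, ← mul_assoc, hconst, ← lintegral_indicator measurableSet_Ioi]
  gcongr with E
  by_cases hE : l < E
  · rw [indicator_of_mem (mem_Ioi.2 (hl.trans_lt hE)), ← lintegral_indicator measurableSet_Ioo]
    refine lintegral_mono fun L => ?_
    refine indicator_le (s := {p : ℝ × ℝ | l < p.1 ∧ 0 < p.2 ∧ p.2 < 2 * R ^ 2 * (p.1 - l)})
      (g := fun p => (Ioo (0 : ℝ) (2 * r ^ 2 * (p.1 - U r))).indicator (fun L => ENNReal.ofReal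
        (Φ (p.1, L) / √(2 * (p.1 - U r - L / (2 * r ^ 2))))) p.2) ?_ (E, L)
    rintro ⟨E, L⟩ ⟨hE, hL, hLR⟩
    dsimp only at hE hL hLR ⊢
    have hLr : L < 2 * r ^ 2 * (E - U r) := by
      refine hLR.trans_le ?_
      have : 0 ≤ E - l := by linarith
      gcongr
    rw [indicator_of_mem (mem_Ioo.2 ⟨hL, hLr⟩)]
    have hdiv : L / (2 * r ^ 2) < E - U r := by
      rw [div_lt_iff₀ (by positivity)]
      linarith
    have hdiv0 : 0 < L / (2 * r ^ 2) := by positivity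
    refine ENNReal.ofReal_le_ofReal (div_le_div_of_nonneg_left (hΦ _) ?_ ?_)
    · exact Real.sqrt_pos.2 (by linarith)
    · exact Real.sqrt_le_sqrt (by linarith)
  · simp [hE]

theorem cutoff_nonrelativistic
    (Φ : ℝ × ℝ → ℝ) (hΦmeas : Measurable Φ) (hΦnonneg : ∀ p, 0 ≤ Φ p)
    (U : ℝ → ℝ) (hUC1 : ContDiffOn ℝ 1 U (Ioi 0))
    (hU : ∀ r ∈ Ioi (0 : ℝ), HasDerivAt U
      ((4 * π / r ^ 2) *
        (∫⁻ s in Ioo (0 : ℝ) r, ENNReal.ofReal (s ^ 2) * rhoVP Φ U s).toReal) r)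
    (hM : ENNReal.ofReal (4 * π) *
        (∫⁻ r in Ioi (0 : ℝ), ENNReal.ofReal (r ^ 2) * rhoVP Φ U r) < ⊤) :
    ∃ Uinf : ℝ, Tendsto U atTop (nhds Uinf) ∧
      ∀ᵐ p : ℝ × ℝ, Uinf < p.1 → 0 < p.2 → Φ p = 0 := by
  have hmass : ∫⁻ r in Ioi (0 : ℝ), ENNReal.ofReal (r ^ 2) * rhoVP Φ U r ≠ ⊤ := by
    intro h
    rw [h, ENNReal.mul_top (by simp [pi_pos])] at hM
    exact lt_irrefl _ hM
  obtain ⟨l, hlim, hmono, hle⟩ := exists_tendsto_of_hasDerivAt_le_div_sq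
    (C := 4 * π * (∫⁻ r in Ioi (0 : ℝ), ENNReal.ofReal (r ^ 2) * rhoVP Φ U r).toReal) hU
    (fun r _ => by positivity) (fun r _ => by
      rw [div_mul_eq_mul_div]
      gcongr
      exact Ioo_subset_Ioi_self)
  refine ⟨l, hlim, ?_⟩
  have key : ∀ n : ℕ, ∀ᵐ p : ℝ × ℝ, l < p.1 → 0 < p.2 →
      p.2 < 2 * ((n : ℝ) + 1) ^ 2 * (p.1 - l) → Φ p = 0 := by
    intro n
    have hn : (1 : ℝ) ≤ (n : ℝ) + 1 := by simp
    have hzero := eq_zero_of_le_of_setLIntegral_Ioi_ne_top (R := (n : ℝ) + 1)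
      (ne_top_of_le_ne_top hmass (lintegral_mono_set (Ioi_subset_Ioi (by positivity))))
      (fun r hr => le_sq_mul_rhoVP hΦnonneg (a := U 1) (l := l) (by positivity) (le_of_lt hr)
        (hmono (mem_Ioi.2 one_pos) (mem_Ioi.2 (by linarith [mem_Ioi.1 hr]))
          (hn.trans (le_of_lt hr)))
        (hle r (mem_Ioi.2 (by linarith [mem_Ioi.1 hr]))))
    have hS : MeasurableSet
        {p : ℝ × ℝ | l < p.1 ∧ 0 < p.2 ∧ p.2 < 2 * ((n : ℝ) + 1) ^ 2 * (p.1 - l)} :=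
      (measurableSet_lt measurable_const measurable_fst).inter
        ((measurableSet_lt measurable_const measurable_snd).inter
          (measurableSet_lt measurable_snd (by fun_prop)))
    have hmeas : Measurable fun p : ℝ × ℝ => ENNReal.ofReal (Φ p / √(2 * (p.1 - U 1))) := by
      fun_prop
    rw [mul_eq_zero, or_iff_right (by simp [pi_pos]),
      ← lintegral_prod _ (hmeas.indicator hS).aemeasurable,
      lintegral_eq_zero_iff (hmeas.indicator hS)] at hzero
    filter_upwards [hzero] with p hp h1 h2 h3
    have hmem : p ∈ {p : ℝ × ℝ | l < p.1 ∧ 0 < p.2 ∧ p.2 < 2 * ((n : ℝ) + 1) ^ 2 * (p.1 - l)} :=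
      ⟨h1, h2, h3⟩
    rw [indicator_of_mem hmem, Pi.zero_apply, ENNReal.ofReal_eq_zero] at hp
    have hpos : 0 < √(2 * (p.1 - U 1)) :=
      Real.sqrt_pos.2 (by linarith [hle 1 (mem_Ioi.2 one_pos)])
    rw [div_le_iff₀ hpos, zero_mul] at hp
    exact le_antisymm hp (hΦnonneg p)
  filter_upwards [ae_all_iff.2 key] with p hp h1 h2
  obtain ⟨n, hn⟩ := exists_nat_gt (p.2 / (2 * (p.1 - l)))
  refine hp n h1 h2 ?_
  have hd : 0 < p.1 - l := sub_pos.2 h1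
  rw [div_lt_iff₀ (by positivity)] at hn
  nlinarith [mul_nonneg (by positivity : (0 : ℝ) ≤ (n : ℝ) ^ 2 + n + 1) hd.le]
end

section
/- Let Φ : ℝ² → [0,∞) be measurable. Suppose λ, μ ∈ C¹((0,∞)) with λ extending continuously to 0 with λ(0) = 0, satisfying the field equations e^{−2λ(r)}(2rλ'(r) − 1) + 1 = 8πr²ρ(r) and e^{−2λ(r)}(2rμ'(r) + 1) − 1 = 8πr²p(r) for all r > 0, where ρ(r) = (2π/r²) e^{−2μ(r)} ∫_{e^{μ(r)}}^∞ ∫₀^{r²(E²e^{−2μ(r)}−1)} Φ(E,L) E² (E² − e^{2μ(r)}(1 + L/r²))^{−1/2} dL dE and p(r) = (2π/r²) e^{−2μ(r)} ∫_{e^{μ(r)}}^∞ ∫₀^{r²(E²e^{−2μ(r)}−1)} Φ(E,L) (E² − e^{2μ(r)}(1 + L/r²))^{1/2} dL dE. If the ADM mass M = 4π ∫₀^∞ r² ρ(r) dr is finite, then the limit μ_∞ = lim_{r→∞} μ(r) exists and is finite, and Φ(E,L) = 0 for almost every (E,L) with E > e^{μ_∞} and L > 0. -/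
open MeasureTheory Real Set Filter
open scoped ENNReal

/-- The energy density induced by the ansatz `f(x,v) = Φ(E,L)` for the static
spherically symmetric Vlasov-Einstein system. -/
noncomputable def rhoVE (Φ : ℝ × ℝ → ℝ) (μ : ℝ → ℝ) (r : ℝ) : ℝ≥0∞ :=
  ENNReal.ofReal (2 * π / r ^ 2 * Real.exp (-2 * μ r)) *
    ∫⁻ E in Ioi (Real.exp (μ r)),
      ∫⁻ L in Ioo (0 : ℝ) (r ^ 2 * (E ^ 2 * Real.exp (-2 * μ r) - 1)),
        ENNReal.ofReal (Φ (E, L) * E ^ 2 /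
          Real.sqrt (E ^ 2 - Real.exp (2 * μ r) * (1 + L / r ^ 2)))

/-- The radial pressure induced by the ansatz `f(x,v) = Φ(E,L)` for the static
spherically symmetric Vlasov-Einstein system. -/
noncomputable def pVE (Φ : ℝ × ℝ → ℝ) (μ : ℝ → ℝ) (r : ℝ) : ℝ≥0∞ :=
  ENNReal.ofReal (2 * π / r ^ 2 * Real.exp (-2 * μ r)) *
    ∫⁻ E in Ioi (Real.exp (μ r)),
      ∫⁻ L in Ioo (0 : ℝ) (r ^ 2 * (E ^ 2 * Real.exp (-2 * μ r) - 1)),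
        ENNReal.ofReal (Φ (E, L) *
          Real.sqrt (E ^ 2 - Real.exp (2 * μ r) * (1 + L / r ^ 2)))

lemma radicand_pos {r m E L : ℝ} (hr : 0 < r)
    (hL : L < r ^ 2 * (E ^ 2 * Real.exp (-2 * m) - 1)) :
    0 < E ^ 2 - Real.exp (2 * m) * (1 + L / r ^ 2) := by
  have h1 : L / r ^ 2 < E ^ 2 * Real.exp (-2 * m) - 1 := by
    rw [div_lt_iff₀ (by positivity)]; linarith
  have h2 : Real.exp (2 * m) * Real.exp (-2 * m) = 1 := by
    rw [← Real.exp_add]; simp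
  nlinarith [mul_lt_mul_of_pos_left h1 (Real.exp_pos (2 * m))]

lemma radicand_le {r m E L : ℝ} (hL : 0 < L) :
    E ^ 2 - Real.exp (2 * m) * (1 + L / r ^ 2) ≤ E ^ 2 := by
  have : 0 ≤ Real.exp (2 * m) * (1 + L / r ^ 2) := by positivity
  linarith

/-- The radial pressure is dominated by the energy density. -/
lemma pVE_le_rhoVE {Φ : ℝ × ℝ → ℝ} (hΦ : ∀ p, 0 ≤ Φ p) (μ : ℝ → ℝ) {r : ℝ} (hr : 0 < r) :
    pVE Φ μ r ≤ rhoVE Φ μ r := by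
  unfold pVE rhoVE
  refine mul_le_mul_right (setLIntegral_mono' measurableSet_Ioi fun E _ =>
    setLIntegral_mono' measurableSet_Ioo fun L hL => ENNReal.ofReal_le_ofReal ?_) _
  have hX := radicand_pos hr hL.2
  rw [mul_div_assoc]
  refine mul_le_mul_of_nonneg_left ?_ (hΦ _)
  rw [le_div_iff₀ (Real.sqrt_pos.2 hX), Real.mul_self_sqrt hX.le]
  exact radicand_le hL.1

/-- A lower bound for `r² ρ(r)` that no longer depends on `r`, valid once `r ≥ R` and `μ r ≤ m`. -/
lemma le_sq_mul_rhoVE {Φ : ℝ × ℝ → ℝ} (hΦ : ∀ p, 0 ≤ Φ p) {μ : ℝ → ℝ} {r R m : ℝ}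
    (hR : 0 < R) (hr : R ≤ r) (hμ : μ r ≤ m) :
    ENNReal.ofReal (2 * π * Real.exp (-2 * m)) * (∫⁻ E in Ioi (Real.exp m),
      ∫⁻ L in Ioo (0 : ℝ) (R ^ 2 * (E ^ 2 * Real.exp (-2 * m) - 1)),
        ENNReal.ofReal (Φ (E, L) * E)) ≤ ENNReal.ofReal (r ^ 2) * rhoVE Φ μ r := by
  have hr0 : 0 < r := hR.trans_le hr
  unfold rhoVE
  rw [← mul_assoc, ← ENNReal.ofReal_mul (by positivity)]
  have hexp : Real.exp (-2 * m) ≤ Real.exp (-2 * μ r) := Real.exp_le_exp.2 (by linarith)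
  refine mul_le_mul' (ENNReal.ofReal_le_ofReal ?_) ?_
  · have : r ^ 2 * (2 * π / r ^ 2 * Real.exp (-2 * μ r)) = 2 * π * Real.exp (-2 * μ r) := by
      field_simp
    rw [this]
    gcongr
  refine (setLIntegral_mono' measurableSet_Ioi fun E hE => ?_).trans
    (lintegral_mono_set (Ioi_subset_Ioi (Real.exp_le_exp.2 hμ)))
  have hE0 : 0 < E := (Real.exp_pos m).trans hE
  have hone : 0 ≤ E ^ 2 * Real.exp (-2 * m) - 1 := by
    have h1 : Real.exp m ^ 2 * Real.exp (-2 * m) = 1 := by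
      rw [← Real.exp_nat_mul, ← Real.exp_add]; simp
    have h2 : Real.exp m ^ 2 ≤ E ^ 2 := by
      have : Real.exp m < E := hE
      gcongr
    nlinarith [mul_le_mul_of_nonneg_right h2 (Real.exp_pos (-2 * m)).le]
  have hsub : R ^ 2 * (E ^ 2 * Real.exp (-2 * m) - 1) ≤
      r ^ 2 * (E ^ 2 * Real.exp (-2 * μ r) - 1) := by
    gcongr
  refine (lintegral_mono_set (Ioo_subset_Ioo_right hsub)).trans ?_
  refine setLIntegral_mono' measurableSet_Ioo fun L hL => ENNReal.ofReal_le_ofReal ?_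
  have hX := radicand_pos hr0 hL.2
  rw [mul_div_assoc]
  refine mul_le_mul_of_nonneg_left ?_ (hΦ _)
  rw [le_div_iff₀ (Real.sqrt_pos.2 hX)]
  have : Real.sqrt (E ^ 2 - Real.exp (2 * μ r) * (1 + L / r ^ 2)) ≤ E :=
    Real.sqrt_le_iff.2 ⟨hE0.le, radicand_le hL.1⟩
  nlinarith

/-- Finiteness of the mass forces `Φ` to vanish above the asymptotic cut-off energy. -/
lemma ae_eq_zero_of_mass_lt_top {Φ : ℝ × ℝ → ℝ} (hΦmeas : Measurable Φ) (hΦ : ∀ p, 0 ≤ Φ p)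
    {μ : ℝ → ℝ} {m : ℝ} (hμ : ∀ r, 0 < r → μ r ≤ m)
    (hM : ∫⁻ r in Ioi (0 : ℝ), ENNReal.ofReal (r ^ 2) * rhoVE Φ μ r < ⊤) :
    ∀ᵐ p : ℝ × ℝ, Real.exp m < p.1 → 0 < p.2 → Φ p = 0 := by
  have key : ∀ n : ℕ, ∀ᵐ p : ℝ × ℝ, Real.exp m < p.1 →
      p.2 ∈ Ioo (0 : ℝ) (((n : ℝ) + 1) ^ 2 * (p.1 ^ 2 * Real.exp (-2 * m) - 1)) → Φ p = 0 := by
    intro n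
    set R : ℝ := (n : ℝ) + 1
    have hR : 0 < R := by positivity
    set I : ℝ≥0∞ := ∫⁻ E in Ioi (Real.exp m),
      ∫⁻ L in Ioo (0 : ℝ) (R ^ 2 * (E ^ 2 * Real.exp (-2 * m) - 1)),
        ENNReal.ofReal (Φ (E, L) * E) with hI
    have hI0 : I = 0 := by
      by_contra hne
      refine hM.ne (top_le_iff.1 ?_)
      calc (⊤ : ℝ≥0∞)
          = ∫⁻ _ in Ioi R, ENNReal.ofReal (2 * π * Real.exp (-2 * m)) * I := by
            rw [setLIntegral_const, Real.volume_Ioi, ENNReal.mul_top]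
            refine mul_ne_zero ?_ hne
            rw [Ne, ENNReal.ofReal_eq_zero, not_le]
            positivity
        _ ≤ ∫⁻ r in Ioi R, ENNReal.ofReal (r ^ 2) * rhoVE Φ μ r :=
            setLIntegral_mono' measurableSet_Ioi fun r hr =>
              le_sq_mul_rhoVE hΦ hR (le_of_lt hr) (hμ r (hR.trans hr))
        _ ≤ _ := lintegral_mono_set (Ioi_subset_Ioi hR.le)
    set A : Set (ℝ × ℝ) := {p | Real.exp m < p.1 ∧ 0 < p.2 ∧
      p.2 < R ^ 2 * (p.1 ^ 2 * Real.exp (-2 * m) - 1)} with hA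
    have hAmeas : MeasurableSet A := by
      have h : MeasurableSet {p : ℝ × ℝ | p.2 < R ^ 2 * (p.1 ^ 2 * Real.exp (-2 * m) - 1)} :=
        measurableSet_lt (by fun_prop) (by fun_prop)
      exact (measurableSet_lt measurable_const measurable_fst).inter
        ((measurableSet_lt measurable_const measurable_snd).inter h)
    have hfm : Measurable fun p : ℝ × ℝ => ENNReal.ofReal (Φ p * p.1) := by fun_prop
    have hint : ∫⁻ p, A.indicator (fun p : ℝ × ℝ => ENNReal.ofReal (Φ p * p.1)) p = 0 := by
      rw [Measure.volume_eq_prod, lintegral_prod _ (hfm.indicator hAmeas).aemeasurable, ← hI0, hI,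
        ← lintegral_indicator measurableSet_Ioi]
      congr 1
      ext E
      by_cases hE : E ∈ Ioi (Real.exp m)
      · rw [indicator_of_mem hE, ← lintegral_indicator measurableSet_Ioo]
        congr 1
        ext L
        have : Real.exp m < E := hE
        simp [indicator, hA, this]
      · have : ¬ Real.exp m < E := hE
        rw [indicator_of_notMem hE]
        simp [indicator, hA, this]
    rw [lintegral_eq_zero_iff (hfm.indicator hAmeas)] at hint
    filter_upwards [hint] with p hp h1 h2
    have hpA : p ∈ A := ⟨h1, h2.1, h2.2⟩
    have hp1 : 0 < p.1 := (Real.exp_pos m).trans h1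
    rw [indicator_of_mem hpA, Pi.zero_apply, ENNReal.ofReal_eq_zero] at hp
    nlinarith [hΦ p]
  filter_upwards [ae_all_iff.2 key] with p hp h1 h2
  have hpos : 0 < p.1 ^ 2 * Real.exp (-2 * m) - 1 := by
    have e1 : Real.exp m ^ 2 * Real.exp (-2 * m) = 1 := by
      rw [← Real.exp_nat_mul, ← Real.exp_add]; simp
    have e2 : Real.exp m ^ 2 < p.1 ^ 2 := by gcongr
    nlinarith [mul_lt_mul_of_pos_right e2 (Real.exp_pos (-2 * m))]
  obtain ⟨n, hn⟩ := exists_nat_gt (p.2 / (p.1 ^ 2 * Real.exp (-2 * m) - 1))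
  refine hp n h1 ⟨h2, ?_⟩
  rw [div_lt_iff₀ hpos] at hn
  have : (n : ℝ) ≤ ((n : ℝ) + 1) ^ 2 := by nlinarith [(Nat.cast_nonneg n : (0 : ℝ) ≤ n)]
  nlinarith

/-- A function that is monotone on `(0, ∞)` and bounded above converges to an upper bound. -/
lemma exists_tendsto_of_monotoneOn_Ioi {f : ℝ → ℝ} {K R : ℝ} (hf : MonotoneOn f (Ioi 0))
    (hK : ∀ r, R ≤ r → f r ≤ K) :
    ∃ l, Tendsto f atTop (nhds l) ∧ ∀ r, 0 < r → f r ≤ l := by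
  have hmono : Monotone fun r => f (max r 1) := fun a b hab =>
    hf (mem_Ioi.2 (by positivity)) (mem_Ioi.2 (by positivity)) (max_le_max_right 1 hab)
  have hbdd : BddAbove (range fun r => f (max r 1)) := by
    refine ⟨K, ?_⟩
    rintro _ ⟨r, rfl⟩
    exact (hmono (le_max_left r R)).trans (hK _ ((le_max_right r R).trans (le_max_left _ _)))
  have ht : Tendsto f atTop (nhds (⨆ r, f (max r 1))) := by
    refine (tendsto_atTop_ciSup hmono hbdd).congr' ?_
    filter_upwards [eventually_ge_atTop 1] with r hr
    rw [max_eq_left hr]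
  refine ⟨_, ht, fun r hr => ge_of_tendsto ht ?_⟩
  filter_upwards [eventually_ge_atTop r] with s hs
  exact hf hr (hr.trans_le hs) hs

/-- If the mass is finite, the energy density is finite on a dense set of radii. -/
lemma exists_rhoVE_lt_top {Φ : ℝ × ℝ → ℝ} {μ : ℝ → ℝ}
    (hM : ∫⁻ r in Ioi (0 : ℝ), ENNReal.ofReal (r ^ 2) * rhoVE Φ μ r < ⊤)
    {a b : ℝ} (ha : 0 < a) (hab : a < b) : ∃ r ∈ Ioo a b, rhoVE Φ μ r < ⊤ := by
  by_contra! h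
  refine hM.ne (top_le_iff.1 ?_)
  calc (⊤ : ℝ≥0∞) = ∫⁻ _ in Ioo a b, (⊤ : ℝ≥0∞) := by
        rw [setLIntegral_const, Real.volume_Ioo, ENNReal.top_mul]
        rw [Ne, ENNReal.ofReal_eq_zero, not_le]
        linarith
    _ ≤ ∫⁻ r in Ioo a b, ENNReal.ofReal (r ^ 2) * rhoVE Φ μ r := by
        refine setLIntegral_mono' measurableSet_Ioo fun r hr => ?_
        rw [top_le_iff.1 (h r hr), ENNReal.mul_top]
        rw [Ne, ENNReal.ofReal_eq_zero, not_le]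
        have : 0 < r := ha.trans hr.1
        positivity
    _ ≤ _ := lintegral_mono_set fun r hr => ha.trans hr.1

/-- Two functions continuous on `(0, ∞)` that are ordered on a dense set are ordered. -/
lemma le_of_le_dense_Ioi {f g : ℝ → ℝ} (hf : ContinuousOn f (Ioi 0)) (hg : ContinuousOn g (Ioi 0))
    (h : ∀ a b : ℝ, 0 < a → a < b → ∃ r ∈ Ioo a b, f r ≤ g r) {r : ℝ} (hr : 0 < r) :
    f r ≤ g r := by
  by_contra! hlt
  have hev : ∀ᶠ s in nhds r, 0 < s ∧ g s < f s :=
    (eventually_gt_nhds hr).and ((hg.continuousAt (Ioi_mem_nhds hr)).eventually_lt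
      (hf.continuousAt (Ioi_mem_nhds hr)) hlt)
  obtain ⟨a, b, hab, hsub⟩ := mem_nhds_iff_exists_Ioo_subset.1 hev
  obtain ⟨s, hs, hfs⟩ := h r b hr hab.2
  exact (hsub ⟨hab.1.trans hs.1, hs.2⟩).2.not_ge hfs

/-- A nonnegative derivative with finite integral bounds the growth of the primitive. -/
lemma le_add_lintegral_toReal {f f' : ℝ → ℝ} {a r : ℝ} (har : a ≤ r)
    (hderiv : ∀ x ∈ Icc a r, HasDerivAt f (f' x) x) (hcont : ContinuousOn f' (Icc a r))
    (hnonneg : ∀ x ∈ Icc a r, 0 ≤ f' x) {J : ℝ≥0∞} (hJ : J ≠ ⊤)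
    (hle : ∫⁻ x in Ioc a r, ENNReal.ofReal (f' x) ≤ J) : f r ≤ f a + J.toReal := by
  have hint : IntervalIntegrable f' volume a r :=
    ContinuousOn.intervalIntegrable (by rwa [uIcc_of_le har])
  have h1 := intervalIntegral.integral_eq_sub_of_hasDerivAt
    (by rwa [uIcc_of_le har]) hint
  rw [intervalIntegral.integral_of_le har, integral_eq_lintegral_of_nonneg_ae
    ((ae_restrict_iff' measurableSet_Ioc).2 (Eventually.of_forall fun x hx =>
      hnonneg x (Ioc_subset_Icc_self hx))) hint.1.aestronglyMeasurable] at h1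
  have := ENNReal.toReal_mono hJ hle
  linarith

theorem cutoff_relativistic
    (Φ : ℝ × ℝ → ℝ) (hΦmeas : Measurable Φ) (hΦnonneg : ∀ p, 0 ≤ Φ p)
    (lam mu : ℝ → ℝ)
    (hlamC1 : ContDiffOn ℝ 1 lam (Ioi 0)) (hmuC1 : ContDiffOn ℝ 1 mu (Ioi 0))
    (hlamcont : ContinuousOn lam (Ici 0)) (hlam0 : lam 0 = 0)
    (hfield1 : ∀ r ∈ Ioi (0 : ℝ),
      Real.exp (-2 * lam r) * (2 * r * deriv lam r - 1) + 1 =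
        8 * π * r ^ 2 * (rhoVE Φ mu r).toReal)
    (hfield2 : ∀ r ∈ Ioi (0 : ℝ),
      Real.exp (-2 * lam r) * (2 * r * deriv mu r + 1) - 1 =
        8 * π * r ^ 2 * (pVE Φ mu r).toReal)
    (hM : ENNReal.ofReal (4 * π) *
        (∫⁻ r in Ioi (0 : ℝ), ENNReal.ofReal (r ^ 2) * rhoVE Φ mu r) < ⊤) :
    ∃ muinf : ℝ, Tendsto mu atTop (nhds muinf) ∧
      ∀ᵐ p : ℝ × ℝ, Real.exp muinf < p.1 → 0 < p.2 → Φ p = 0 := by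
  set ρ : ℝ → ℝ := fun r => (rhoVE Φ mu r).toReal
  set P : ℝ → ℝ := fun r => (pVE Φ mu r).toReal
  set I : ℝ≥0∞ := ∫⁻ r in Ioi (0 : ℝ), ENNReal.ofReal (r ^ 2) * rhoVE Φ mu r with hI
  have hItop : I < ⊤ := by
    refine lt_top_iff_ne_top.2 fun h => hM.ne ?_
    rw [h, ENNReal.mul_top]
    rw [Ne, ENNReal.ofReal_eq_zero, not_le]
    positivity
  have hρ0 : ∀ r, 0 ≤ ρ r := fun r => ENNReal.toReal_nonneg
  have hP0 : ∀ r, 0 ≤ P r := fun r => ENNReal.toReal_nonneg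
  have hlamd : ∀ r, 0 < r → HasDerivAt lam (deriv lam r) r := fun r hr =>
    ((hlamC1.differentiableOn one_ne_zero).differentiableAt (Ioi_mem_nhds hr)).hasDerivAt
  have hmud : ∀ r, 0 < r → HasDerivAt mu (deriv mu r) r := fun r hr =>
    ((hmuC1.differentiableOn one_ne_zero).differentiableAt (Ioi_mem_nhds hr)).hasDerivAt
  have hlam' := hlamC1.continuousOn_deriv_of_isOpen isOpen_Ioi le_rfl
  have hmu' := hmuC1.continuousOn_deriv_of_isOpen isOpen_Ioi le_rfl
  have hlamc := hlamC1.continuousOn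
  have hρc : ContinuousOn (fun r => 8 * π * r ^ 2 * ρ r) (Ioi 0) :=
    ContinuousOn.congr (by fun_prop) fun r hr => (hfield1 r hr).symm
  have hPc : ContinuousOn (fun r => 8 * π * r ^ 2 * P r) (Ioi 0) :=
    ContinuousOn.congr (by fun_prop) fun r hr => (hfield2 r hr).symm
  have hPρ : ∀ r, 0 < r → 8 * π * r ^ 2 * P r ≤ 8 * π * r ^ 2 * ρ r := fun r hr => by
    refine le_of_le_dense_Ioi hPc hρc (fun a b ha hab => ?_) hr
    obtain ⟨s, hs, hst⟩ := exists_rhoVE_lt_top hItop ha hab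
    refine ⟨s, hs, mul_le_mul_of_nonneg_left ?_ (by positivity)⟩
    exact ENNReal.toReal_mono hst.ne (pVE_le_rhoVE hΦnonneg mu (ha.trans hs.1))
  -- the quasilocal mass
  set m : ℝ → ℝ := fun r => r * (1 - Real.exp (-2 * lam r)) / 2 with hm
  have hmd : ∀ r, 0 < r → HasDerivAt m (4 * π * r ^ 2 * ρ r) r := fun r hr => by
    have h := (((hasDerivAt_id r).mul
      ((((hlamd r hr).const_mul (-2)).exp).const_sub 1)).div_const 2)
    refine h.congr_deriv ?_
    have := hfield1 r hr
    simp only [id]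
    linarith
  have hmc : ContinuousOn m (Ici 0) := by fun_prop
  have hmmono : MonotoneOn m (Ici 0) := by
    refine monotoneOn_of_deriv_nonneg (convex_Ici 0) hmc ?_ ?_ <;> rw [interior_Ici]
    · exact fun r hr => (hmd r hr).differentiableAt.differentiableWithinAt
    · intro r hr
      rw [(hmd r hr).deriv]
      have := hρ0 r
      positivity
  have hm0 : ∀ r, 0 < r → 0 ≤ m r := fun r hr => by
    have := hmmono (mem_Ici.2 le_rfl) hr.le hr.le
    simpa [hm] using this
  obtain ⟨C, hC0, hC⟩ : ∃ C, 0 ≤ C ∧ ∀ r, 1 ≤ r → m r ≤ C := by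
    refine ⟨m 1 + (ENNReal.ofReal (4 * π) * I).toReal,
      add_nonneg (hm0 1 one_pos) ENNReal.toReal_nonneg, fun r hr => ?_⟩
    refine le_add_lintegral_toReal hr (fun x hx => hmd x (one_pos.trans_le hx.1)) ?_
      (fun x _ => mul_nonneg (by positivity) (hρ0 x)) hM.ne ?_
    · refine ((hρc.div_const 2).congr fun x _ => ?_).mono fun x hx => one_pos.trans_le hx.1
      ring
    · rw [hI, ← lintegral_const_mul' _ _ ENNReal.ofReal_ne_top]
      refine (setLIntegral_mono' measurableSet_Ioc fun x hx => ?_).trans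
        (lintegral_mono_set fun x hx => one_pos.trans hx.1)
      rw [ENNReal.ofReal_mul (by positivity), ENNReal.ofReal_mul (by positivity), mul_assoc]
      gcongr
      exact ENNReal.ofReal_toReal_le
  have hexp : ∀ r, 0 < r → Real.exp (-2 * lam r) = 1 - 2 * m r / r := fun r hr => by
    simp only [hm]
    field_simp
    ring
  have hmu_eq : ∀ r, 0 < r → Real.exp (-2 * lam r) * deriv mu r =
      m r / r ^ 2 + 4 * π * r * P r := fun r hr => by
    have h2 : Real.exp (-2 * lam r) * (2 * r * deriv mu r + 1) - 1 = 8 * π * r ^ 2 * P r :=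
      hfield2 r hr
    have h3 := hexp r hr
    have h4 : Real.exp (-2 * lam r) * deriv mu r * (2 * r) =
        2 * m r / r + 8 * π * r ^ 2 * P r := by linear_combination h2 - h3
    have h5 : (m r / r ^ 2 + 4 * π * r * P r) * (2 * r) =
        2 * m r / r + 8 * π * r ^ 2 * P r := by
      field_simp
      ring
    exact mul_right_cancel₀ (by positivity) (h4.trans h5.symm)
  have hmumono : MonotoneOn mu (Ioi 0) := by
    refine monotoneOn_of_deriv_nonneg (convex_Ioi 0) hmuC1.continuousOn ?_ ?_ <;>
      rw [interior_Ioi]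
    · exact fun r hr => (hmud r hr).differentiableAt.differentiableWithinAt
    · intro r hr
      have hr' : 0 < r := hr
      have : 0 ≤ Real.exp (-2 * lam r) * deriv mu r := by
        rw [hmu_eq r hr]
        have := hm0 r hr
        have := hP0 r
        positivity
      exact nonneg_of_mul_nonneg_right this (Real.exp_pos _)
  set R : ℝ := max 1 (4 * C)
  have hR1 : 1 ≤ R := le_max_left _ _
  have hmu_le : ∀ r, R ≤ r → deriv mu r ≤ 2 * C / r ^ 2 + 2 * (4 * π * r ^ 2 * ρ r) := by
    intro r hr
    have hr1 : 1 ≤ r := hR1.trans hr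
    have hr0 : 0 < r := one_pos.trans_le hr1
    have hhalf : 1 / 2 ≤ Real.exp (-2 * lam r) := by
      rw [hexp r hr0]
      have : 2 * m r / r ≤ 1 / 2 := by
        rw [div_le_iff₀ hr0]
        have := hC r hr1
        have := (le_max_right 1 (4 * C)).trans hr
        linarith
      linarith
    have h1 : m r / r ^ 2 ≤ C / r ^ 2 := by
      gcongr
      exact hC r hr1
    have h2 : 4 * π * r * P r ≤ 4 * π * r ^ 2 * ρ r := by
      have := hPρ r hr0
      have h3 : 4 * π * r * P r ≤ 4 * π * r ^ 2 * P r := by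
        have := hP0 r
        gcongr
        nlinarith
      linarith
    have hnn : 0 ≤ C / r ^ 2 + 4 * π * r ^ 2 * ρ r := by
      have := hρ0 r
      positivity
    have h3 := hmu_eq r hr0
    have h4 : 2 * C / r ^ 2 = 2 * (C / r ^ 2) := by ring
    rw [h4]
    by_contra! hlt
    nlinarith
  have hanti : AntitoneOn (fun r => mu r - 2 * m r + 2 * C / r) (Ici R) := by
    have hd : ∀ r, R ≤ r → HasDerivAt (fun r => mu r - 2 * m r + 2 * C / r)
        (deriv mu r - 2 * (4 * π * r ^ 2 * ρ r) - 2 * C / r ^ 2) r := fun r hr => by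
      have hr0 : 0 < r := one_pos.trans_le (hR1.trans hr)
      have h := ((hmud r hr0).sub ((hmd r hr0).const_mul 2)).add
        ((hasDerivAt_inv hr0.ne').const_mul (2 * C))
      simp only [← div_eq_mul_inv] at h
      refine h.congr_deriv ?_
      ring
    refine antitoneOn_of_deriv_nonpos (convex_Ici R)
      (fun r hr => (hd r hr).continuousAt.continuousWithinAt) ?_ ?_ <;> rw [interior_Ici]
    · exact fun r hr => (hd r (le_of_lt hr)).differentiableAt.differentiableWithinAt
    · intro r hr
      rw [(hd r (le_of_lt hr)).deriv]
      linarith [hmu_le r (le_of_lt hr)]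
  obtain ⟨l, hl, hle⟩ := exists_tendsto_of_monotoneOn_Ioi
    (K := mu R - 2 * m R + 2 * C / R + 2 * C) (R := R) hmumono fun r hr => by
      have h1 := hanti (mem_Ici.2 le_rfl) (mem_Ici.2 hr) hr
      have h2 := hC r (hR1.trans hr)
      have h3 : 0 ≤ 2 * C / r := by
        have : 0 < r := one_pos.trans_le (hR1.trans hr)
        positivity
      simp only at h1
      linarith
  exact ⟨l, hl, ae_eq_zero_of_mass_lt_top hΦmeas hΦnonneg hle hItop⟩
end

section
/- Let E_min ∈ {−∞, 0}, let φ : (E_min, ∞) → [0,∞) be measurable, E₀ > E_min, and k > −1 such that on every compact subset K ⊂ (E_min, ∞) there is a constant C ≥ 0 with 0 ≤ φ(E) ≤ C (E₀ − E)₊^k for all E ∈ K. If m > −1 and k + m + 1 > 0, then the function g_m(u) = ∫_u^∞ φ(E)(E − u)^m dE is continuous on (E_min, ∞). -/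
open MeasureTheory Real Set

open Filter Topology

/-- Dominated convergence with a varying dominating family whose integrals converge. -/
theorem tendsto_integral_of_le_of_tendsto_integral {α ι : Type*} [MeasurableSpace α]
    {μ : Measure α} {l : Filter ι} [l.IsCountablyGenerated] {F G : ι → α → ℝ} {f g : α → ℝ}
    (hF_meas : ∀ᶠ i in l, AEStronglyMeasurable (F i) μ)
    (hG_int : ∀ᶠ i in l, Integrable (G i) μ) (hg_int : Integrable g μ)
    (hg_nonneg : ∀ a, 0 ≤ g a)
    (hF_nonneg : ∀ᶠ i in l, ∀ a, 0 ≤ F i a) (hFG : ∀ᶠ i in l, ∀ a, F i a ≤ G i a)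
    (hfg : ∀ a, f a ≤ g a)
    (hF : ∀ᵐ a ∂μ, Tendsto (fun i => F i a) l (𝓝 (f a)))
    (hG : ∀ᵐ a ∂μ, Tendsto (fun i => G i a) l (𝓝 (g a)))
    (hG_lim : Tendsto (fun i => ∫ a, G i a ∂μ) l (𝓝 (∫ a, g a ∂μ))) :
    Tendsto (fun i => ∫ a, F i a ∂μ) l (𝓝 (∫ a, f a ∂μ)) := by
  have hminF : Tendsto (fun i => ∫ a, min (F i a) (g a) ∂μ) l (𝓝 (∫ a, f a ∂μ)) := by
    refine tendsto_integral_filter_of_dominated_convergence g ?_ ?_ hg_int ?_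
    · filter_upwards [hF_meas] with i hi using hi.inf hg_int.1
    · filter_upwards [hF_nonneg] with i hi
      refine Eventually.of_forall fun a => ?_
      rw [Real.norm_of_nonneg (le_min (hi a) (hg_nonneg a))]
      exact min_le_right _ _
    · filter_upwards [hF] with a ha
      simpa [min_eq_left (hfg a)] using ha.min (tendsto_const_nhds (x := g a))
  have hminG : Tendsto (fun i => ∫ a, min (G i a) (g a) ∂μ) l (𝓝 (∫ a, g a ∂μ)) := by
    refine tendsto_integral_filter_of_dominated_convergence g ?_ ?_ hg_int ?_
    · filter_upwards [hG_int] with i hi using hi.1.inf hg_int.1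
    · filter_upwards [hF_nonneg, hFG] with i hi hi'
      refine Eventually.of_forall fun a => ?_
      rw [Real.norm_of_nonneg (le_min ((hi a).trans (hi' a)) (hg_nonneg a))]
      exact min_le_right _ _
    · filter_upwards [hG] with a ha
      simpa using ha.min (tendsto_const_nhds (x := g a))
  have hupper := hminF.add (hG_lim.sub hminG)
  rw [sub_self, add_zero] at hupper
  have hint : ∀ᶠ i in l, Integrable (F i) μ := by
    filter_upwards [hF_meas, hG_int, hF_nonneg, hFG] with i h₁ h₂ h₃ h₄
    refine h₂.mono' h₁ (Eventually.of_forall fun a => ?_)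
    rw [Real.norm_of_nonneg (h₃ a)]
    exact h₄ a
  refine tendsto_of_tendsto_of_tendsto_of_le_of_le' hminF hupper ?_ ?_
  · filter_upwards [hint] with i hi
    exact integral_mono (hi.inf hg_int) hi fun a => min_le_left _ _
  · filter_upwards [hint, hG_int, hFG] with i hi hGi hle
    have hmF : Integrable (fun a => min (F i a) (g a)) μ := hi.inf hg_int
    have hmG : Integrable (fun a => min (G i a) (g a)) μ := hGi.inf hg_int
    have hsub : Integrable (fun a => G i a - min (G i a) (g a)) μ := hGi.sub hmG
    rw [← integral_sub hGi hmG, ← integral_add hmF hsub]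
    refine integral_mono hi (hmF.add hsub) fun a => ?_
    have := hle a
    simp only
    rcases le_total (F i a) (g a) with h | h
    · rw [min_eq_left h]
      linarith [min_le_left (G i a) (g a)]
    · rw [min_eq_right h, min_eq_right (h.trans this)]
      linarith

/-- The Beta kernel on `(u, c)`, extended by zero. -/
noncomputable def betaKernel (k m c u E : ℝ) : ℝ :=
  (Ioo u c).indicator (fun E => (c - E) ^ k * (E - u) ^ m) E

theorem betaKernel_nonneg (k m c u E : ℝ) : 0 ≤ betaKernel k m c u E := by
  refine indicator_nonneg (fun E hE => ?_) E
  have h₁ : 0 ≤ c - E := by linarith [hE.2]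
  have h₂ : 0 ≤ E - u := by linarith [hE.1]
  positivity

theorem integrable_betaKernel_zero_one {k m : ℝ} (hk : -1 < k) (hm : -1 < m) :
    Integrable (betaKernel k m 1 0) := by
  have h := Complex.betaIntegral_convergent (u := ((m + 1 : ℝ) : ℂ)) (v := ((k + 1 : ℝ) : ℂ))
    (by simp; linarith) (by simp; linarith)
  rw [intervalIntegrable_iff_integrableOn_Ioo_of_le zero_le_one] at h
  unfold betaKernel
  rw [integrable_indicator_iff measurableSet_Ioo]
  refine (Integrable.re h).congr ?_
  filter_upwards [ae_restrict_mem measurableSet_Ioo] with x hx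
  have h₁ : 0 ≤ 1 - x := by linarith [hx.2]
  have e₁ : (x : ℂ) ^ (((m + 1 : ℝ) : ℂ) - 1) = ((x ^ m : ℝ) : ℂ) := by
    rw [Complex.ofReal_cpow hx.1.le]; simp
  have e₂ : (1 - (x : ℂ)) ^ (((k + 1 : ℝ) : ℂ) - 1) = (((1 - x) ^ k : ℝ) : ℂ) := by
    rw [Complex.ofReal_cpow h₁]; simp
  rw [e₁, e₂, ← Complex.ofReal_mul]
  simp [mul_comm]

theorem betaKernel_eq_scaled {k m c u : ℝ} (h : u < c) (E : ℝ) :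
    betaKernel k m c u E = (c - u) ^ (k + m) * betaKernel k m 1 0 ((E - u) / (c - u)) := by
  have hcu : 0 < c - u := sub_pos.2 h
  unfold betaKernel
  by_cases hE : E ∈ Ioo u c
  · have h₁ : 0 < E - u := sub_pos.2 hE.1
    have h₂ : 0 < c - E := sub_pos.2 hE.2
    have hmem : (E - u) / (c - u) ∈ Ioo (0 : ℝ) 1 :=
      ⟨by positivity, by rw [div_lt_one hcu]; linarith⟩
    have e : 1 - (E - u) / (c - u) = (c - E) / (c - u) := by field_simp; ring
    rw [indicator_of_mem hE, indicator_of_mem hmem, e, sub_zero, div_rpow h₂.le hcu.le,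
      div_rpow h₁.le hcu.le, rpow_add hcu]
    have := rpow_pos_of_pos hcu k
    have := rpow_pos_of_pos hcu m
    field_simp
  · have hmem : (E - u) / (c - u) ∉ Ioo (0 : ℝ) 1 := by
      rintro ⟨h₁, h₂⟩
      rw [div_lt_one hcu] at h₂
      rw [div_pos_iff_of_pos_right hcu] at h₁
      exact hE ⟨by linarith, by linarith⟩
    rw [indicator_of_notMem hE, indicator_of_notMem hmem, mul_zero]

theorem betaKernel_eq_zero_of_le {k m c u : ℝ} (h : c ≤ u) : betaKernel k m c u = 0 := by
  ext E
  simp [betaKernel, Ioo_eq_empty_of_le h]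

theorem integrable_betaKernel {k m : ℝ} (hk : -1 < k) (hm : -1 < m) (c u : ℝ) :
    Integrable (betaKernel k m c u) := by
  rcases lt_or_ge u c with h | h
  · rw [funext (betaKernel_eq_scaled h)]
    exact (((integrable_betaKernel_zero_one hk hm).comp_div (sub_pos.2 h).ne').comp_sub_right
      u).const_mul _
  · rw [betaKernel_eq_zero_of_le h]
    exact integrable_zero _ _ _

theorem integral_betaKernel {k m : ℝ} (hkm : 0 < k + m + 1) (c u : ℝ) :
    ∫ E, betaKernel k m c u E =
      (max (c - u) 0) ^ (k + m + 1) * ∫ E, betaKernel k m 1 0 E := by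
  rcases lt_or_ge u c with h | h
  · have hcu : 0 < c - u := sub_pos.2 h
    simp_rw [betaKernel_eq_scaled h]
    rw [integral_const_mul,
      integral_sub_right_eq_self (fun x => betaKernel k m 1 0 (x / (c - u))) u,
      Measure.integral_comp_div, max_eq_left hcu.le, rpow_add_one hcu.ne', abs_of_pos hcu,
      smul_eq_mul, mul_assoc]
  · rw [betaKernel_eq_zero_of_le h, max_eq_right (by linarith), zero_rpow hkm.ne']
    simp

theorem tendsto_indicator_Ioo_mul_rpow {ψ : ℝ → ℝ} {m c u₀ E : ℝ} (hE : E ≠ u₀) :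
    Tendsto (fun u => (Ioo u c).indicator (fun E => ψ E * (E - u) ^ m) E) (𝓝 u₀)
      (𝓝 ((Ioo u₀ c).indicator (fun E => ψ E * (E - u₀) ^ m) E)) := by
  rcases lt_or_gt_of_ne hE with h | h
  · have hzero : ∀ᶠ u in 𝓝 u₀, (Ioo u c).indicator (fun E => ψ E * (E - u) ^ m) E = 0 := by
      filter_upwards [lt_mem_nhds h] with u hu
      exact indicator_of_notMem (fun hmem => hu.not_gt hmem.1) _
    rw [hzero.self_of_nhds]
    exact tendsto_const_nhds.congr' (hzero.mono fun u hu => hu.symm)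
  · by_cases hc : E < c
    · rw [indicator_of_mem (show E ∈ Ioo u₀ c from ⟨h, hc⟩)]
      have hlim : Tendsto (fun u => ψ E * (E - u) ^ m) (𝓝 u₀) (𝓝 (ψ E * (E - u₀) ^ m)) :=
        ((tendsto_const_nhds.sub tendsto_id).rpow_const (Or.inl (sub_pos.2 h).ne')).const_mul _
      refine hlim.congr' ?_
      filter_upwards [gt_mem_nhds h] with u hu
      rw [indicator_of_mem (show E ∈ Ioo u c from ⟨hu, hc⟩)]
    · have hnot : ∀ u, E ∉ Ioo u c := fun u hmem => hc hmem.2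
      simp [indicator_of_notMem (hnot _)]

theorem indicator_Ioo_nonneg_and_le_betaKernel {φ : ℝ → ℝ} {a c C k m u : ℝ}
    (hbound : ∀ E ∈ Ioo a c, 0 ≤ φ E ∧ φ E ≤ C * (c - E) ^ k) (hC : 0 ≤ C) (hu : a < u) (E : ℝ) :
    0 ≤ (Ioo u c).indicator (fun E => φ E * (E - u) ^ m) E ∧
      (Ioo u c).indicator (fun E => φ E * (E - u) ^ m) E ≤ C * betaKernel k m c u E := by
  by_cases hE : E ∈ Ioo u c
  · have hpow : 0 ≤ (E - u) ^ m := rpow_nonneg (sub_pos.2 hE.1).le m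
    obtain ⟨h₀, h₁⟩ := hbound E ⟨hu.trans hE.1, hE.2⟩
    rw [betaKernel, indicator_of_mem hE, indicator_of_mem hE, ← mul_assoc]
    exact ⟨mul_nonneg h₀ hpow, mul_le_mul_of_nonneg_right h₁ hpow⟩
  · rw [indicator_of_notMem hE]
    exact ⟨le_rfl, mul_nonneg hC (betaKernel_nonneg ..)⟩

theorem integrableOn_Ioo_mul_rpow {φ : ℝ → ℝ} (hmeas : Measurable φ) {a c C k m u : ℝ}
    (hk : -1 < k) (hm : -1 < m) (hC : 0 ≤ C)
    (hbound : ∀ E ∈ Ioo a c, 0 ≤ φ E ∧ φ E ≤ C * (c - E) ^ k) (hu : a < u) :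
    IntegrableOn (fun E => φ E * (E - u) ^ m) (Ioo u c) := by
  rw [← integrable_indicator_iff measurableSet_Ioo]
  refine ((integrable_betaKernel hk hm c u).const_mul C).mono'
    ((Measurable.indicator (by fun_prop) measurableSet_Ioo).aestronglyMeasurable)
    (Eventually.of_forall fun E => ?_)
  obtain ⟨h₀, h₁⟩ := indicator_Ioo_nonneg_and_le_betaKernel (m := m) hbound hC hu E
  rwa [Real.norm_of_nonneg h₀]

theorem continuousAt_setIntegral_Ioo_mul_rpow {φ : ℝ → ℝ} (hmeas : Measurable φ)
    {a c C k m u₀ : ℝ} (hk : -1 < k) (hm : -1 < m) (hkm : 0 < k + m + 1) (hC : 0 ≤ C)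
    (hbound : ∀ E ∈ Ioo a c, 0 ≤ φ E ∧ φ E ≤ C * (c - E) ^ k) (hu₀ : a < u₀) :
    ContinuousAt (fun u => ∫ E in Ioo u c, φ E * (E - u) ^ m) u₀ := by
  have hne : ∀ᵐ E : ℝ, E ≠ u₀ := by simp [ae_iff]
  have hev : ∀ᶠ u in 𝓝 u₀, a < u := lt_mem_nhds hu₀
  simp_rw [← integral_indicator (measurableSet_Ioo (a := _) (b := c)), ContinuousAt]
  refine tendsto_integral_of_le_of_tendsto_integral (G := fun u E => C * betaKernel k m c u E)
    (g := fun E => C * betaKernel k m c u₀ E) ?_ ?_ ((integrable_betaKernel hk hm c u₀).const_mul C)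
    (fun E => mul_nonneg hC (betaKernel_nonneg ..)) ?_ ?_ ?_ ?_ ?_ ?_
  · exact Eventually.of_forall fun u =>
      (Measurable.indicator (by fun_prop) measurableSet_Ioo).aestronglyMeasurable
  · exact Eventually.of_forall fun u => (integrable_betaKernel hk hm c u).const_mul C
  · filter_upwards [hev] with u hu E
      using (indicator_Ioo_nonneg_and_le_betaKernel hbound hC hu E).1
  · filter_upwards [hev] with u hu E
      using (indicator_Ioo_nonneg_and_le_betaKernel hbound hC hu E).2
  · exact fun E => (indicator_Ioo_nonneg_and_le_betaKernel hbound hC hu₀ E).2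
  · filter_upwards [hne] with E hE using tendsto_indicator_Ioo_mul_rpow hE
  · filter_upwards [hne] with E hE
      using (tendsto_indicator_Ioo_mul_rpow hE).const_mul C
  · simp_rw [integral_const_mul]
    refine Tendsto.const_mul C ?_
    rw [funext (integral_betaKernel hkm c), integral_betaKernel hkm c u₀]
    have hcont : Continuous fun u : ℝ => (max (c - u) 0) ^ (k + m + 1) :=
      (by fun_prop : Continuous fun u : ℝ => max (c - u) 0).rpow_const fun _ => Or.inr hkm.le
    exact (hcont.tendsto u₀).mul_const _

theorem rpow_le_two_rpow_abs_mul {x y : ℝ} (m : ℝ) (hx : 0 < x) (h₁ : x ≤ 2 * y) (h₂ : y ≤ 2 * x) :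
    y ^ m ≤ 2 ^ |m| * x ^ m := by
  have hy : 0 < y := by linarith
  rcases le_total 0 m with h | h
  · rw [abs_of_nonneg h, ← mul_rpow zero_le_two hx.le]
    exact rpow_le_rpow hy.le h₂ h
  · rw [abs_of_nonpos h, rpow_neg zero_le_two, ← inv_rpow zero_le_two,
      ← mul_rpow (by norm_num) hx.le]
    exact rpow_le_rpow_of_nonpos (by positivity) (by linarith) h

theorem norm_mul_sub_rpow_le {φ : ℝ → ℝ} {c u v E : ℝ} (m : ℝ) (hφ : 0 ≤ φ E) (hE : c ≤ E)
    (hu : u + 1 / 2 ≤ c) (hv : v + 1 / 2 ≤ c) (huv : |u - v| ≤ 1 / 2) :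
    ‖φ E * (E - v) ^ m‖ ≤ 2 ^ |m| * (φ E * (E - u) ^ m) := by
  obtain ⟨h₁, h₂⟩ := abs_le.1 huv
  have hpow := rpow_le_two_rpow_abs_mul (x := E - u) (y := E - v) m (by linarith) (by linarith)
    (by linarith)
  rw [Real.norm_of_nonneg (mul_nonneg hφ (rpow_nonneg (by linarith) m)), mul_left_comm]
  exact mul_le_mul_of_nonneg_left hpow hφ

theorem integrableOn_Ici_mul_rpow_of_near {φ : ℝ → ℝ} (hmeas : Measurable φ) {c m u v : ℝ}
    (hφ : ∀ E ∈ Ici c, 0 ≤ φ E) (hu : u + 1 / 2 ≤ c) (hv : v + 1 / 2 ≤ c) (huv : |u - v| ≤ 1 / 2)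
    (hint : IntegrableOn (fun E => φ E * (E - u) ^ m) (Ici c)) :
    IntegrableOn (fun E => φ E * (E - v) ^ m) (Ici c) := by
  refine (hint.const_mul (2 ^ |m|)).mono'
    (Measurable.aestronglyMeasurable (by fun_prop)) ?_
  filter_upwards [ae_restrict_mem measurableSet_Ici] with E hE
    using norm_mul_sub_rpow_le m (hφ E hE) hE hu hv huv

theorem continuousAt_setIntegral_Ici_mul_rpow {φ : ℝ → ℝ} (hmeas : Measurable φ) {c m u₀ : ℝ}
    (hφ : ∀ E ∈ Ici c, 0 ≤ φ E) (hu₀ : u₀ + 1 ≤ c)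
    (hint : IntegrableOn (fun E => φ E * (E - u₀) ^ m) (Ici c)) :
    ContinuousAt (fun u => ∫ E in Ici c, φ E * (E - u) ^ m) u₀ := by
  refine tendsto_integral_filter_of_dominated_convergence _ ?_ ?_ (hint.const_mul (2 ^ |m|)) ?_
  · exact Eventually.of_forall fun u => Measurable.aestronglyMeasurable (by fun_prop)
  · filter_upwards [Metric.closedBall_mem_nhds u₀ (by norm_num : (0 : ℝ) < 1 / 2)] with u hu
    rw [Metric.mem_closedBall, dist_comm, Real.dist_eq] at hu
    filter_upwards [ae_restrict_mem measurableSet_Ici] with E hE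
    exact norm_mul_sub_rpow_le m (hφ E hE) hE (by linarith) (by linarith [(abs_le.1 hu).1]) hu
  · filter_upwards [ae_restrict_mem measurableSet_Ici] with E hE
    have hpos : 0 < E - u₀ := by linarith [mem_Ici.1 hE]
    exact ((tendsto_const_nhds.sub tendsto_id).rpow_const (Or.inl hpos.ne')).const_mul _

/-- The integral need not converge at infinity here: if it diverges for one lower limit then it
diverges for all nearby ones, and the Bochner integral is locally zero. -/
theorem continuousAt_setIntegral_Ioi_mul_rpow_of_le_const {φ : ℝ → ℝ} (hmeas : Measurable φ)
    {a C m u₀ : ℝ} (hm : -1 < m) (hC : 0 ≤ C) (hu₀ : a < u₀) (hφ : ∀ E ∈ Ioi a, 0 ≤ φ E)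
    (hbound : ∀ E ∈ Ioo a (u₀ + 1), φ E ≤ C) :
    ContinuousAt (fun u => ∫ E in Ioi u, φ E * (E - u) ^ m) u₀ := by
  have hk : (-1 : ℝ) < 0 := by norm_num
  have hbound' : ∀ E ∈ Ioo a (u₀ + 1), 0 ≤ φ E ∧ φ E ≤ C * (u₀ + 1 - E) ^ (0 : ℝ) := fun E hE =>
    ⟨hφ E hE.1, by simpa using hbound E hE⟩
  have hφ' : ∀ E ∈ Ici (u₀ + 1), 0 ≤ φ E := fun E hE => hφ E (by
    have := mem_Ici.1 hE
    exact mem_Ioi.2 (by linarith))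
  have hnear : ∀ᶠ u in 𝓝 u₀, a < u ∧ |u₀ - u| ≤ 1 / 2 := by
    filter_upwards [lt_mem_nhds hu₀,
      Metric.closedBall_mem_nhds u₀ (by norm_num : (0 : ℝ) < 1 / 2)] with u hu hu'
    rw [Metric.mem_closedBall, dist_comm, Real.dist_eq] at hu'
    exact ⟨hu, hu'⟩
  by_cases hint : IntegrableOn (fun E => φ E * (E - u₀) ^ m) (Ici (u₀ + 1))
  · refine ((continuousAt_setIntegral_Ioo_mul_rpow hmeas hk hm (by linarith) hC hbound' hu₀).add
      (continuousAt_setIntegral_Ici_mul_rpow hmeas hφ' le_rfl hint)).congr ?_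
    filter_upwards [hnear] with u hu
    have hlt : u < u₀ + 1 := by linarith [(abs_le.1 hu.2).1]
    rw [← Ioo_union_Ici_eq_Ioi hlt]
    refine (setIntegral_union ?_ measurableSet_Ici
      (integrableOn_Ioo_mul_rpow hmeas hk hm hC hbound' hu.1)
      (integrableOn_Ici_mul_rpow_of_near hmeas hφ' (by linarith)
        (by linarith [(abs_le.1 hu.2).1]) hu.2 hint)).symm
    exact Set.disjoint_left.2 fun E h₁ h₂ => h₁.2.not_ge h₂
  · refine (continuousAt_const (y := (0 : ℝ))).congr ?_
    filter_upwards [hnear] with u hu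
    refine (integral_undef fun h => hint ?_).symm
    have hlt : u < u₀ + 1 := by linarith [(abs_le.1 hu.2).1]
    exact integrableOn_Ici_mul_rpow_of_near hmeas hφ' (by linarith [(abs_le.1 hu.2).1])
      (by linarith) (by rw [abs_sub_comm]; exact hu.2)
      (IntegrableOn.mono_set h (Ici_subset_Ioi.2 hlt))

theorem gm_continuous
    (Emin : EReal) (hEmin : Emin = ⊥ ∨ Emin = 0)
    (φ : ℝ → ℝ) (hmeas : Measurable φ)
    (E₀ : ℝ) (hE₀ : Emin < (E₀ : EReal)) (k : ℝ) (hk : -1 < k)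
    (hbound : ∀ K : Set ℝ, IsCompact K → K ⊆ {E : ℝ | Emin < (E : EReal)} →
      ∃ C : ℝ, 0 ≤ C ∧ ∀ E ∈ K, 0 ≤ φ E ∧ φ E ≤ C * (max (E₀ - E) 0) ^ k)
    (m : ℝ) (hm : -1 < m) (hkm : 0 < k + m + 1) :
    ContinuousOn (fun u : ℝ => ∫ E in Ioi u, φ E * (E - u) ^ m)
      {u : ℝ | Emin < (u : EReal)} := by
  intro u₀ hu₀
  refine ContinuousAt.continuousWithinAt ?_
  obtain ⟨a, haE, ha⟩ := EReal.lt_iff_exists_real_btwn.1 (lt_min hu₀ hE₀)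
  have hau : a < u₀ := EReal.coe_lt_coe_iff.1 (ha.trans_le (min_le_left _ _))
  have hIci : ∀ E : ℝ, a ≤ E → Emin < (E : EReal) := fun E hE =>
    haE.trans_le (EReal.coe_le_coe_iff.2 hE)
  have hpoint : ∀ E : ℝ, a ≤ E →
      0 ≤ φ E ∧ ∃ C : ℝ, φ E ≤ C * (max (E₀ - E) 0) ^ k := fun E hE => by
    obtain ⟨C, -, hC⟩ := hbound {E} isCompact_singleton (by simpa using hIci E hE)
    exact ⟨(hC E rfl).1, C, (hC E rfl).2⟩
  by_cases hk₀ : k = 0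
  · obtain ⟨C, hC₀, hC⟩ := hbound (Icc a (u₀ + 1)) isCompact_Icc fun E hE => hIci E hE.1
    refine continuousAt_setIntegral_Ioi_mul_rpow_of_le_const hmeas hm hC₀ hau
      (fun E hE => (hpoint E (le_of_lt hE)).1) fun E hE => ?_
    simpa [hk₀] using (hC E (Ioo_subset_Icc_self hE)).2
  · have haE₀ : a < E₀ := EReal.coe_lt_coe_iff.1 (ha.trans_le (min_le_right _ _))
    obtain ⟨C, hC₀, hC⟩ := hbound (Icc a E₀) isCompact_Icc fun E hE => hIci E hE.1
    have hzero : ∀ E, E₀ ≤ E → φ E = 0 := fun E hE => by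
      obtain ⟨h₀, C', h₁⟩ := hpoint E (haE₀.le.trans hE)
      rw [max_eq_right (by linarith), zero_rpow hk₀, mul_zero] at h₁
      exact le_antisymm h₁ h₀
    have hlocal : ∀ E ∈ Ioo a E₀, 0 ≤ φ E ∧ φ E ≤ C * (E₀ - E) ^ k := fun E hE => by
      have h := hC E (Ioo_subset_Icc_self hE)
      rwa [max_eq_left (sub_pos.2 hE.2).le] at h
    refine (continuousAt_setIntegral_Ioo_mul_rpow hmeas hk hm hkm hC₀ hlocal hau).congr
      (Eventually.of_forall fun u => ?_)
    refine (setIntegral_eq_of_subset_of_forall_sdiff_eq_zero measurableSet_Ioi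
      Ioo_subset_Ioi_self fun E hE => ?_).symm
    rw [hzero E (not_lt.1 fun h => hE.2 ⟨hE.1, h⟩), zero_mul]
end

section
/- Let l > −1, let φ : ℝ → [0,∞] be measurable, let x ∈ ℝ³ with |x| = r > 0, and let u ∈ ℝ. Then, as an identity in [0,∞], ∫_{ℝ³} φ(½|v|² + u) |x × v|^{2l} dv = 2^{l+3/2} π c_{l,−1/2} r^{2l} ∫_u^∞ φ(E)(E − u)^{l+1/2} dE, where c_{l,−1/2} = ∫₀¹ s^l (1−s)^{−1/2} ds. -/
open MeasureTheory Real Set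
open scoped ENNReal

/-- The cross product of two vectors in `ℝ³`. -/
noncomputable def cross3 (x v : Fin 3 → ℝ) : Fin 3 → ℝ :=
  ![x 1 * v 2 - x 2 * v 1, x 2 * v 0 - x 0 * v 2, x 0 * v 1 - x 1 * v 0]

/-- The Euclidean norm on `ℝ³`. -/
noncomputable def norm3 (w : Fin 3 → ℝ) : ℝ :=
  Real.sqrt (w 0 ^ 2 + w 1 ^ 2 + w 2 ^ 2)

/-- The substitution `y = z ^ 2` on the positive half-line. -/
lemma lintegral_Ioi_comp_sq (g : ℝ → ℝ≥0∞) :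
    ∫⁻ z in Ioi (0 : ℝ), ENNReal.ofReal (2 * z) * g (z ^ 2) = ∫⁻ y in Ioi (0 : ℝ), g y := by
  have himage : (fun z : ℝ => z ^ 2) '' Ioi 0 = Ioi 0 := by
    ext y
    constructor
    · rintro ⟨z, hz, rfl⟩
      exact pow_pos (mem_Ioi.1 hz) 2
    · intro hy
      exact ⟨√y, Real.sqrt_pos.2 hy, Real.sq_sqrt (le_of_lt hy)⟩
  have hsubst := lintegral_image_eq_lintegral_deriv_mul_of_monotoneOn
    (s := Ioi (0 : ℝ)) (f := fun z => z ^ 2) (f' := fun z => 2 * z) measurableSet_Ioi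
    (fun z _ => by simpa using (hasDerivAt_pow 2 z).hasDerivWithinAt)
    (fun z hz w _ h => pow_le_pow_left₀ (le_of_lt hz) h 2) g
  rw [himage] at hsubst
  exact hsubst.symm

/-- The substitution `y = z ^ 2` on the whole line. -/
lemma lintegral_comp_sq (g : ℝ → ℝ≥0∞) :
    ∫⁻ z : ℝ, g (z ^ 2) =
      ∫⁻ y in Ioi (0 : ℝ), ENNReal.ofReal (y ^ (-(1/2) : ℝ)) * g y := by
  have hneg : ∫⁻ z in Iio (0 : ℝ), g (z ^ 2) = ∫⁻ z in Ioi (0 : ℝ), g (z ^ 2) := by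
    have := (Measure.measurePreserving_neg (volume : Measure ℝ)).setLIntegral_comp_preimage_emb
      (MeasurableEquiv.neg ℝ).measurableEmbedding (fun z => g (z ^ 2)) (Ioi 0)
    simpa using this
  have hsplit : ∫⁻ z : ℝ, g (z ^ 2) = ∫⁻ z in Ioi (0 : ℝ), 2 * g (z ^ 2) := by
    rw [← lintegral_add_compl _ (measurableSet_Ioi (a := (0 : ℝ))), compl_Ioi,
      setLIntegral_congr Iio_ae_eq_Iic.symm, hneg, lintegral_const_mul' _ _ (by simp), two_mul]
  rw [hsplit, ← lintegral_Ioi_comp_sq fun y => ENNReal.ofReal (y ^ (-(1/2) : ℝ)) * g y]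
  refine setLIntegral_congr_fun measurableSet_Ioi fun z hz => ?_
  have hz : 0 < z := hz
  have hpow : 2 * z * (z ^ 2) ^ (-(1/2) : ℝ) = 2 := by
    rw [Real.rpow_neg (by positivity), ← Real.sqrt_eq_rpow, Real.sqrt_sq hz.le]
    field_simp
  change 2 * g (z ^ 2) = _
  rw [← mul_assoc, ← ENNReal.ofReal_mul (by positivity), hpow, ENNReal.ofReal_ofNat]

/-- Polar coordinates for a radial function, in terms of the squared radius. -/
lemma lintegral_prod_comp_sq_add_sq {g : ℝ → ℝ≥0∞} (hg : Measurable g) :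
    ∫⁻ p : ℝ × ℝ, g (p.1 ^ 2 + p.2 ^ 2) = ENNReal.ofReal π * ∫⁻ w in Ioi (0 : ℝ), g w := by
  rw [← lintegral_comp_polarCoord_symm, polarCoord_target]
  have hradial : ∀ p : ℝ × ℝ, (polarCoord.symm p).1 ^ 2 + (polarCoord.symm p).2 ^ 2 = p.1 ^ 2 := by
    intro p
    simp only [polarCoord_symm_apply]
    linear_combination p.1 ^ 2 * Real.cos_sq_add_sin_sq p.2
  simp_rw [hradial, smul_eq_mul]
  rw [Measure.volume_eq_prod, ← Measure.prod_restrict,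
    lintegral_prod _ (by fun_prop)]
  simp_rw [lintegral_const, Measure.restrict_apply_univ, Real.volume_Ioo]
  rw [← lintegral_Ioi_comp_sq g, ← lintegral_const_mul _ (by fun_prop)]
  refine setLIntegral_congr_fun measurableSet_Ioi fun ρ _ => ?_
  rw [show π - -π = π * 2 by ring, ENNReal.ofReal_mul pi_pos.le, ENNReal.ofReal_mul zero_le_two]
  ring

lemma intervalIntegrable_rpow_mul_one_sub_rpow {a b : ℝ} (ha : -1 < a) (hb : -1 < b) :
    IntervalIntegrable (fun s : ℝ => s ^ a * (1 - s) ^ b) volume 0 1 := by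
  have hcomplex := Complex.betaIntegral_convergent (u := ((a + 1 : ℝ) : ℂ)) (v := ((b + 1 : ℝ) : ℂ))
    (by rw [Complex.ofReal_re]; linarith) (by rw [Complex.ofReal_re]; linarith)
  rw [intervalIntegrable_iff_integrableOn_Ioo_of_le zero_le_one] at hcomplex ⊢
  refine (integrableOn_congr_fun (fun s hs => ?_) measurableSet_Ioo).1 hcomplex.re
  have hcast : ((s : ℂ) ^ (((a + 1 : ℝ) : ℂ) - 1) * (1 - (s : ℂ)) ^ (((b + 1 : ℝ) : ℂ) - 1)) =
      ((s ^ a * (1 - s) ^ b : ℝ) : ℂ) := by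
    rw [Complex.ofReal_mul, Complex.ofReal_cpow hs.1.le, Complex.ofReal_cpow (by linarith [hs.2])]
    push_cast
    simp
  change RCLike.re _ = _
  rw [hcast]
  simp

/-- The Beta integral over `(0, t)`, by scaling. -/
lemma lintegral_Ioo_rpow_mul_sub_rpow {a b t : ℝ} (ha : -1 < a) (hb : -1 < b) (ht : 0 < t) :
    ∫⁻ w in Ioo 0 t, ENNReal.ofReal (w ^ a * (t - w) ^ b) =
      ENNReal.ofReal (∫ s in (0 : ℝ)..1, s ^ a * (1 - s) ^ b) *
        ENNReal.ofReal (t ^ (a + b + 1)) := by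
  have himage : (fun s : ℝ => t * s) '' Ioo 0 1 = Ioo 0 t := by
    simpa using Set.image_mul_left_Ioo ht 0 1
  have hsubst := lintegral_image_eq_lintegral_deriv_mul_of_monotoneOn
    (s := Ioo (0 : ℝ) 1) (f := fun s => t * s) (f' := fun _ => t) measurableSet_Ioo
    (fun s _ => by simpa using ((hasDerivAt_id s).const_mul t).hasDerivWithinAt)
    (fun s _ w _ h => mul_le_mul_of_nonneg_left h ht.le)
    (fun w => ENNReal.ofReal (w ^ a * (t - w) ^ b))
  rw [himage] at hsubst
  have hint := intervalIntegrable_rpow_mul_one_sub_rpow ha hb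
  rw [intervalIntegrable_iff_integrableOn_Ioo_of_le zero_le_one] at hint
  rw [hsubst, intervalIntegral.integral_of_le zero_le_one, integral_Ioc_eq_integral_Ioo,
    ofReal_integral_eq_lintegral_ofReal hint, ← lintegral_mul_const _ (by fun_prop)]
  · refine setLIntegral_congr_fun measurableSet_Ioo fun s hs => ?_
    have hs1 : 0 ≤ 1 - s := by linarith [hs.2]
    change ENNReal.ofReal t * ENNReal.ofReal ((t * s) ^ a * (t - t * s) ^ b) = _
    rw [← ENNReal.ofReal_mul ht.le,
      ← ENNReal.ofReal_mul (mul_nonneg (rpow_nonneg hs.1.le _) (rpow_nonneg hs1 _)),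
      show t - t * s = t * (1 - s) by ring, Real.mul_rpow ht.le hs.1.le, Real.mul_rpow ht.le hs1,
      Real.rpow_add_one ht.ne', Real.rpow_add ht]
    ring_nf
  · filter_upwards [ae_restrict_mem measurableSet_Ioo] with s hs
    exact mul_nonneg (rpow_nonneg hs.1.le _) (rpow_nonneg (by linarith [hs.2]) _)

/-- Integrating a function of `w + y` against the product of two power densities. -/
lemma lintegral_lintegral_rpow_mul_rpow_comp_add {a b : ℝ} (ha : -1 < a) (hb : -1 < b)
    {g : ℝ → ℝ≥0∞} (hg : Measurable g) :
    ∫⁻ w in Ioi (0 : ℝ), ∫⁻ y in Ioi (0 : ℝ),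
        ENNReal.ofReal (w ^ a) * (ENNReal.ofReal (y ^ b) * g (w + y)) =
      ENNReal.ofReal (∫ s in (0 : ℝ)..1, s ^ a * (1 - s) ^ b) *
        ∫⁻ t in Ioi (0 : ℝ), ENNReal.ofReal (t ^ (a + b + 1)) * g t := by
  let S : Set (ℝ × ℝ) := {p | 0 < p.1 ∧ p.1 < p.2}
  have hS : MeasurableSet S :=
    (measurableSet_lt measurable_const measurable_fst).inter
      (measurableSet_lt measurable_fst measurable_snd)
  let F : ℝ × ℝ → ℝ≥0∞ :=
    S.indicator fun p => ENNReal.ofReal (p.1 ^ a * (p.2 - p.1) ^ b) * g p.2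
  have hF : Measurable F := Measurable.indicator (by fun_prop) hS
  have hleft : ∀ w : ℝ, (Ioi (0 : ℝ)).indicator (fun w => ∫⁻ y in Ioi (0 : ℝ),
      ENNReal.ofReal (w ^ a) * (ENNReal.ofReal (y ^ b) * g (w + y))) w = ∫⁻ t, F (w, t) := by
    intro w
    by_cases hw : 0 < w
    · rw [indicator_of_mem (mem_Ioi.2 hw), ← lintegral_indicator measurableSet_Ioi,
        ← lintegral_add_left_eq_self (fun t => F (w, t)) w]
      refine lintegral_congr fun y => ?_
      by_cases hy : 0 < y
      · have hmem : (w, w + y) ∈ S := ⟨hw, by simpa using hy⟩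
        simp only [F]
        rw [indicator_of_mem (mem_Ioi.2 hy), indicator_of_mem hmem]
        simp only [add_sub_cancel_left]
        rw [ENNReal.ofReal_mul (rpow_nonneg hw.le _), mul_assoc]
      · have hmem : (w, w + y) ∉ S := fun h => hy (by simpa using h.2)
        simp only [F]
        rw [indicator_of_notMem (by simpa using hy), indicator_of_notMem hmem]
    · have hzero : ∀ t, F (w, t) = 0 := fun t => indicator_of_notMem (fun h => hw h.1) _
      rw [indicator_of_notMem (by simpa using hw)]
      simp [hzero]
  have hright : ∀ t : ℝ, ∫⁻ w, F (w, t) = (Ioi (0 : ℝ)).indicator (fun t =>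
      ENNReal.ofReal (∫ s in (0 : ℝ)..1, s ^ a * (1 - s) ^ b) *
        (ENNReal.ofReal (t ^ (a + b + 1)) * g t)) t := by
    intro t
    have hslice : ∀ w, F (w, t) =
        (Ioo 0 t).indicator (fun w => ENNReal.ofReal (w ^ a * (t - w) ^ b) * g t) w :=
      fun w => rfl
    simp_rw [hslice]
    rw [lintegral_indicator measurableSet_Ioo, lintegral_mul_const _ (by fun_prop)]
    by_cases ht : 0 < t
    · rw [indicator_of_mem (mem_Ioi.2 ht), lintegral_Ioo_rpow_mul_sub_rpow ha hb ht, mul_assoc]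
    · rw [indicator_of_notMem (by simpa using ht), Ioo_eq_empty ht]
      simp
  rw [← lintegral_indicator measurableSet_Ioi, lintegral_congr hleft,
    lintegral_lintegral_swap (f := fun w t => F (w, t)) hF.aemeasurable, lintegral_congr hright,
    lintegral_indicator measurableSet_Ioi, lintegral_const_mul _ (by fun_prop)]

/-- The substitution `E = t / 2 + u`. -/
lemma lintegral_Ioi_comp_half_add (u c : ℝ) (φ : ℝ → ℝ≥0∞) :
    ∫⁻ t in Ioi (0 : ℝ), ENNReal.ofReal (t ^ c) * φ (1 / 2 * t + u) =
      ENNReal.ofReal (2 ^ (c + 1)) * ∫⁻ E in Ioi u, φ E * ENNReal.ofReal ((E - u) ^ c) := by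
  have himage : (fun t : ℝ => 1 / 2 * t + u) '' Ioi 0 = Ioi u := by
    ext E
    constructor
    · rintro ⟨t, ht, rfl⟩
      have ht : 0 < t := ht
      simpa using ht
    · intro hE
      exact ⟨2 * (E - u), by simpa using hE, by ring⟩
  have hsubst := lintegral_image_eq_lintegral_deriv_mul_of_monotoneOn
    (s := Ioi (0 : ℝ)) (f := fun t => 1 / 2 * t + u) (f' := fun _ => 1 / 2) measurableSet_Ioi
    (fun t _ => by
      simpa using (((hasDerivAt_id t).const_mul (1 / 2 : ℝ)).add_const u).hasDerivWithinAt)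
    (fun t _ w _ h => by dsimp only; linarith) (fun E => φ E * ENNReal.ofReal ((E - u) ^ c))
  rw [himage] at hsubst
  rw [hsubst, ← lintegral_const_mul' _ _ ENNReal.ofReal_ne_top]
  refine setLIntegral_congr_fun measurableSet_Ioi fun t ht => ?_
  have ht : 0 < t := ht
  have hpow : t ^ c = 2 ^ (c + 1) * (1 / 2) * (1 / 2 * t + u - u) ^ c := by
    rw [add_sub_cancel_right, Real.mul_rpow (by norm_num) ht.le, Real.rpow_add_one two_ne_zero,
      one_div, Real.inv_rpow zero_le_two]
    field_simp
  change ENNReal.ofReal (t ^ c) * φ (1 / 2 * t + u) = _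
  rw [hpow, ENNReal.ofReal_mul (by positivity), ENNReal.ofReal_mul (by positivity)]
  ring

/-- Rotating `x` onto the third axis: an integral over `ℝ³` of a function of `|v|` and `⟨x, v⟩`. -/
lemma lintegral_comp_norm3_inner (G : ℝ → ℝ → ℝ≥0∞) (x : Fin 3 → ℝ)
    (hx : 0 < norm3 x) :
    ∫⁻ v : Fin 3 → ℝ, G (v 0 ^ 2 + v 1 ^ 2 + v 2 ^ 2) (x 0 * v 0 + x 1 * v 1 + x 2 * v 2) =
      ∫⁻ v : Fin 3 → ℝ, G (v 0 ^ 2 + v 1 ^ 2 + v 2 ^ 2) (norm3 x * v 2) := by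
  let X : EuclideanSpace ℝ (Fin 3) := WithLp.toLp 2 x
  have hX : ‖X‖ = norm3 x := by
    simp [EuclideanSpace.norm_eq, Fin.sum_univ_three, norm3, X]
  have horth : Orthonormal ℝ (({2} : Set (Fin 3)).domRestrict fun _ => (norm3 x)⁻¹ • X) := by
    refine ⟨fun i => ?_, fun i j hij => absurd (Subsingleton.elim i j) hij⟩
    simp only [Set.domRestrict_apply, norm_smul, hX, norm_inv, Real.norm_eq_abs, abs_of_pos hx]
    exact inv_mul_cancel₀ hx.ne'
  obtain ⟨b, hb⟩ := horth.exists_orthonormalBasis_extension_of_card_eq (by simp)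
  have hb2 : X = norm3 x • b 2 := by
    rw [hb 2 rfl, smul_inv_smul₀ hx.ne']
  let T : EuclideanSpace ℝ (Fin 3) → ℝ≥0∞ := fun v => G (‖v‖ ^ 2) (inner ℝ X v)
  have hnorm : ∀ v : Fin 3 → ℝ,
      ‖(WithLp.toLp 2 v : EuclideanSpace ℝ (Fin 3))‖ ^ 2 = v 0 ^ 2 + v 1 ^ 2 + v 2 ^ 2 := by
    intro v
    simp [EuclideanSpace.norm_sq_eq, Fin.sum_univ_three]
  have hleft : ∀ v : Fin 3 → ℝ, G (v 0 ^ 2 + v 1 ^ 2 + v 2 ^ 2)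
      (x 0 * v 0 + x 1 * v 1 + x 2 * v 2) = T (WithLp.toLp 2 v) := by
    intro v
    simp only [T, hnorm]
    congr 1
    simp [PiLp.inner_apply, Fin.sum_univ_three, X, mul_comm]
  have hright : ∀ v : Fin 3 → ℝ, G (v 0 ^ 2 + v 1 ^ 2 + v 2 ^ 2) (norm3 x * v 2) =
      T (b.repr.symm (WithLp.toLp 2 v)) := by
    intro v
    simp only [T]
    rw [LinearIsometryEquiv.norm_map, hnorm, hb2, real_inner_smul_left,
      ← b.repr_apply_apply, LinearIsometryEquiv.apply_symm_apply]
  have hmp := PiLp.volume_preserving_toLp (Fin 3)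
  have hemb : MeasurableEmbedding (WithLp.toLp 2 : (Fin 3 → ℝ) → EuclideanSpace ℝ (Fin 3)) :=
    (MeasurableEquiv.toLp 2 (Fin 3 → ℝ)).measurableEmbedding
  simp_rw [hleft, hright]
  rw [hmp.lintegral_comp_emb hemb T, hmp.lintegral_comp_emb hemb (fun v => T (b.repr.symm v)),
    b.measurePreserving_repr_symm.lintegral_comp_emb
      b.repr.symm.toHomeomorph.measurableEmbedding T]

/-- Tonelli on `ℝ³`, splitting off the last coordinate. -/
lemma lintegral_fin_three {f : ℝ → ℝ × ℝ → ℝ≥0∞} (hf : Measurable (Function.uncurry f)) :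
    ∫⁻ v : Fin 3 → ℝ, f (v 2) (v 0, v 1) = ∫⁻ z : ℝ, ∫⁻ p : ℝ × ℝ, f z p := by
  have hsplit := volume_preserving_piFinSuccAbove (fun _ : Fin 3 => ℝ) 2
  have htwo := (MeasurePreserving.id (volume : Measure ℝ)).prod (volume_preserving_finTwoArrow ℝ)
  have hcomp := (htwo.comp hsplit).lintegral_comp hf
  rw [lintegral_prod _ hf.aemeasurable] at hcomp
  exact hcomp

/-- Cylindrical coordinates on `ℝ³`, in terms of the squared height `y` and squared radius `w`. -/
lemma lintegral_fin_three_comp_sq {g : ℝ → ℝ → ℝ≥0∞} (hg : Measurable (Function.uncurry g)) :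
    ∫⁻ v : Fin 3 → ℝ, g (v 2 ^ 2) (v 0 ^ 2 + v 1 ^ 2) =
      ENNReal.ofReal π * ∫⁻ w in Ioi (0 : ℝ), ∫⁻ y in Ioi (0 : ℝ),
        ENNReal.ofReal (y ^ (-(1/2) : ℝ)) * g y w := by
  have hmeas : Measurable (Function.uncurry fun (y w : ℝ) =>
      ENNReal.ofReal (y ^ (-(1/2) : ℝ)) * g y w) :=
    Measurable.mul (f := fun p : ℝ × ℝ => ENNReal.ofReal (p.1 ^ (-(1/2) : ℝ))) (by fun_prop) hg
  calc
    _ = ∫⁻ z : ℝ, ∫⁻ p : ℝ × ℝ, g (z ^ 2) (p.1 ^ 2 + p.2 ^ 2) :=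
      lintegral_fin_three (f := fun z p => g (z ^ 2) (p.1 ^ 2 + p.2 ^ 2))
        (hg.comp (by fun_prop : Measurable fun q : ℝ × ℝ × ℝ =>
          (q.1 ^ 2, q.2.1 ^ 2 + q.2.2 ^ 2)))
    _ = ∫⁻ z : ℝ, ENNReal.ofReal π * ∫⁻ w in Ioi (0 : ℝ), g (z ^ 2) w :=
      lintegral_congr fun z => lintegral_prod_comp_sq_add_sq hg.of_uncurry_left
    _ = ENNReal.ofReal π * ∫⁻ y in Ioi (0 : ℝ), ∫⁻ w in Ioi (0 : ℝ),
          ENNReal.ofReal (y ^ (-(1/2) : ℝ)) * g y w := by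
      rw [lintegral_const_mul' _ _ ENNReal.ofReal_ne_top,
        lintegral_comp_sq fun y => ∫⁻ w in Ioi (0 : ℝ), g y w]
      simp_rw [lintegral_const_mul' _ _ ENNReal.ofReal_ne_top]
    _ = _ := by
      rw [lintegral_lintegral_swap hmeas.aemeasurable]

lemma norm3_cross3 (x v : Fin 3 → ℝ) :
    norm3 (cross3 x v) = √(norm3 x ^ 2 * (v 0 ^ 2 + v 1 ^ 2 + v 2 ^ 2) -
      (x 0 * v 0 + x 1 * v 1 + x 2 * v 2) ^ 2) := by
  rw [norm3, norm3, Real.sq_sqrt (by positivity)]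
  congr 1
  simp only [cross3, Matrix.cons_val]
  ring

theorem density_reduction_nonrelativistic
    (l : ℝ) (hl : -1 < l) (φ : ℝ → ℝ≥0∞) (hφ : Measurable φ)
    (x : Fin 3 → ℝ) (r : ℝ) (hr : 0 < r) (hx : norm3 x = r) (u : ℝ) :
    (∫⁻ v : Fin 3 → ℝ,
        φ (1 / 2 * norm3 v ^ 2 + u) *
          ENNReal.ofReal (norm3 (cross3 x v) ^ (2 * l))) =
      ENNReal.ofReal (2 ^ (l + 3 / 2) * π *
          (∫ s in (0:ℝ)..1, s ^ l * (1 - s) ^ (-(1/2) : ℝ)) * r ^ (2 * l)) *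
        ∫⁻ E in Ioi u, φ E * ENNReal.ofReal ((E - u) ^ (l + 1 / 2)) := by
  let κ : ℝ≥0∞ := ENNReal.ofReal (r ^ (2 * l))
  have hrotate := lintegral_comp_norm3_inner
    (fun q m => φ (1 / 2 * q + u) * ENNReal.ofReal (√(r ^ 2 * q - m ^ 2) ^ (2 * l))) x (hx ▸ hr)
  have hnorm : ∀ v : Fin 3 → ℝ, norm3 v ^ 2 = v 0 ^ 2 + v 1 ^ 2 + v 2 ^ 2 :=
    fun v => Real.sq_sqrt (by positivity)
  have hpow : ∀ w z : ℝ, 0 ≤ w →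
      ENNReal.ofReal (√(r ^ 2 * (w + z ^ 2) - (r * z) ^ 2) ^ (2 * l)) =
        κ * ENNReal.ofReal (w ^ l) := by
    intro w z hw
    rw [show r ^ 2 * (w + z ^ 2) - (r * z) ^ 2 = r ^ 2 * w by ring, Real.sqrt_mul (sq_nonneg r),
      Real.sqrt_sq hr.le, Real.mul_rpow hr.le (Real.sqrt_nonneg w), Real.sqrt_eq_rpow,
      ← Real.rpow_mul hw, ENNReal.ofReal_mul (by positivity)]
    congr 4
    ring
  let g : ℝ → ℝ → ℝ≥0∞ := fun y w => κ * (ENNReal.ofReal (w ^ l) * φ (1 / 2 * (w + y) + u))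
  have hg : Measurable (Function.uncurry g) := by
    simp only [g, Function.uncurry_def]
    fun_prop
  have hB : 0 ≤ ∫ s in (0 : ℝ)..1, s ^ l * (1 - s) ^ (-(1/2) : ℝ) :=
    intervalIntegral.integral_nonneg zero_le_one fun s hs =>
      mul_nonneg (rpow_nonneg hs.1 _) (rpow_nonneg (by linarith [hs.2]) _)
  calc
    _ = ∫⁻ v : Fin 3 → ℝ, g (v 2 ^ 2) (v 0 ^ 2 + v 1 ^ 2) := by
      simp_rw [norm3_cross3, hx, hnorm] at hrotate ⊢
      rw [hrotate]
      refine lintegral_congr fun v => ?_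
      rw [hpow _ _ (by positivity)]
      simp only [g]
      ring
    _ = ENNReal.ofReal π * ∫⁻ w in Ioi (0 : ℝ), ∫⁻ y in Ioi (0 : ℝ),
          ENNReal.ofReal (y ^ (-(1/2) : ℝ)) * g y w := lintegral_fin_three_comp_sq hg
    _ = ENNReal.ofReal π * (κ * ∫⁻ w in Ioi (0 : ℝ), ∫⁻ y in Ioi (0 : ℝ),
          ENNReal.ofReal (w ^ l) *
            (ENNReal.ofReal (y ^ (-(1/2) : ℝ)) * φ (1 / 2 * (w + y) + u))) := by
      rw [← lintegral_const_mul' κ _ ENNReal.ofReal_ne_top]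
      congr 1
      refine lintegral_congr fun w => ?_
      rw [← lintegral_const_mul' κ _ ENNReal.ofReal_ne_top]
      refine lintegral_congr fun y => ?_
      simp only [g]
      ring
    _ = _ := by
      rw [lintegral_lintegral_rpow_mul_rpow_comp_add hl (by norm_num)
          (g := fun t => φ (1 / 2 * t + u)) (by fun_prop),
        lintegral_Ioi_comp_half_add, show l + -(1/2) + 1 = l + 1 / 2 by ring,
        show l + 1 / 2 + 1 = l + 3 / 2 by ring, ENNReal.ofReal_mul (by positivity),
        ENNReal.ofReal_mul (by positivity), ENNReal.ofReal_mul (by positivity)]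
      ring
end

section
/- Let φ : ℝ → [0,∞) be measurable with φ(E) = 0 for E ≥ E₀, and on every compact subset of ℝ bounded by C(E₀−E)₊^k for some k > −1. Let l > −1/2 with k + l + 3/2 > 0, and let U₀ ∈ ℝ. Then there exists a unique function U ∈ C¹([0,∞)) with U(0) = U₀ satisfying U'(r) = (2^{l+7/2} π² c_{l,−1/2} / r²) ∫₀^r s^{2l+2} g_{l+1/2}(U(s)) ds for all r > 0, where g_{l+1/2}(u) = ∫_u^{E₀} φ(E)(E − u)^{l+1/2} dE and c_{l,−1/2} = ∫₀¹ s^l(1−s)^{−1/2} ds. -/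
open MeasureTheory Real Set

/-- `U` is a `C¹` solution on `[0,∞)` of the reduced spherically symmetric
Vlasov-Poisson problem with central value `U₀`. -/
def IsReducedVPSolution (E₀ l : ℝ) (φ : ℝ → ℝ) (U₀ : ℝ) (U : ℝ → ℝ) : Prop :=
  U 0 = U₀ ∧ ContDiffOn ℝ 1 U (Set.Ici 0) ∧
    ∀ r ∈ Set.Ioi (0 : ℝ), HasDerivAt U
      ((2 ^ (l + 7 / 2) * Real.pi ^ 2 *
          (∫ s in (0:ℝ)..1, s ^ l * (1 - s) ^ (-(1/2) : ℝ)) / r ^ 2) *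
        ∫ s in (0:ℝ)..r, s ^ (2 * l + 2) *
          ∫ E in (U s)..E₀, φ E * (E - U s) ^ (l + 1 / 2)) r

/-- The radial field generated by the source `h`: for `t > 0` it equals
`A / t ^ 2 * ∫ s in 0..t, s ^ (a + 1) * h s`, rescaled to the unit interval. -/
noncomputable def radialField (A a : ℝ) (h : ℝ → ℝ) (t : ℝ) : ℝ :=
  A * t ^ a * ∫ σ in (0:ℝ)..1, σ ^ (a + 1) * h (t * σ)

/-- The potential of `radialField A a h` vanishing at the origin. -/
noncomputable def radialPotential (A a : ℝ) (h : ℝ → ℝ) (r : ℝ) : ℝ :=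
  ∫ t in (0:ℝ)..r, radialField A a h t

/-- The exponent of the weight for which the Volterra operator is a contraction. -/
noncomputable def weightExp (lam a t : ℝ) : ℝ := lam * t ^ (a + 1) / (a + 1)

section Radial

variable {A a : ℝ} {h h₁ h₂ : ℝ → ℝ}

lemma continuous_rpow_mul_comp (ha : 0 < a) (hh : Continuous h) (t : ℝ) :
    Continuous fun σ : ℝ => σ ^ (a + 1) * h (t * σ) :=
  (Real.continuous_rpow_const (by linarith)).mul (by fun_prop)

lemma continuous_radialField (ha : 0 < a) (hh : Continuous h) :
    Continuous (radialField A a h) := by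
  have h1 : Continuous fun t : ℝ => t ^ a := Real.continuous_rpow_const ha.le
  have h2 : Continuous fun t : ℝ => ∫ σ in (0:ℝ)..1, σ ^ (a + 1) * h (t * σ) := by
    apply intervalIntegral.continuous_parametric_intervalIntegral_of_continuous'
    have h3 : Continuous fun σ : ℝ => σ ^ (a + 1) :=
      Real.continuous_rpow_const (by linarith)
    exact (h3.comp continuous_snd).mul (by fun_prop)
  exact (continuous_const.mul h1).mul h2

lemma radialField_nonneg (hA : 0 ≤ A) (hh : ∀ s, 0 ≤ s → 0 ≤ h s) {t : ℝ} (ht : 0 ≤ t) :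
    0 ≤ radialField A a h t := by
  refine mul_nonneg (mul_nonneg hA (rpow_nonneg ht _)) ?_
  exact intervalIntegral.integral_nonneg zero_le_one fun σ hσ =>
    mul_nonneg (rpow_nonneg hσ.1 _) (hh _ (mul_nonneg ht hσ.1))

lemma radialField_eq (A a : ℝ) (h : ℝ → ℝ) {t : ℝ} (ht : 0 < t) :
    radialField A a h t = A / t ^ 2 * ∫ s in (0:ℝ)..t, s ^ (a + 1) * h s := by
  have h1 := intervalIntegral.mul_integral_comp_mul_left (a := 0) (b := 1)
    (f := fun s : ℝ => s ^ (a + 1) * h s) (c := t)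
  rw [mul_zero, mul_one] at h1
  have h2 : ∫ σ in (0:ℝ)..1, (t * σ) ^ (a + 1) * h (t * σ)
      = t ^ (a + 1) * ∫ σ in (0:ℝ)..1, σ ^ (a + 1) * h (t * σ) := by
    rw [← intervalIntegral.integral_const_mul]
    refine intervalIntegral.integral_congr fun σ hσ => ?_
    rw [uIcc_of_le zero_le_one] at hσ
    simp only [Real.mul_rpow ht.le hσ.1, mul_assoc]
  rw [← h1, h2, rpow_add_one ht.ne', radialField]
  field_simp

lemma abs_radialField_sub_le (hA : 0 ≤ A) (ha : 0 < a) (h₁c : Continuous h₁)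
    (h₂c : Continuous h₂) {t c : ℝ} (ht : 0 ≤ t)
    (hc : ∀ s ∈ Icc 0 t, |h₁ s - h₂ s| ≤ c) :
    |radialField A a h₁ t - radialField A a h₂ t| ≤ A * t ^ a * c := by
  have hAt : 0 ≤ A * t ^ a := mul_nonneg hA (rpow_nonneg ht _)
  rw [radialField, radialField, ← mul_sub, abs_mul, abs_of_nonneg hAt,
    ← intervalIntegral.integral_sub ((continuous_rpow_mul_comp ha h₁c t).intervalIntegrable _ _)
      ((continuous_rpow_mul_comp ha h₂c t).intervalIntegrable _ _)]
  refine mul_le_mul_of_nonneg_left ?_ hAt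
  have h3 := intervalIntegral.norm_integral_le_of_norm_le_const (a := 0) (b := 1) (C := c)
    (f := fun σ : ℝ => σ ^ (a + 1) * h₁ (t * σ) - σ ^ (a + 1) * h₂ (t * σ)) ?_
  · simpa using h3
  intro σ hσ
  rw [uIoc_of_le zero_le_one] at hσ
  have h4 : |h₁ (t * σ) - h₂ (t * σ)| ≤ c :=
    hc _ ⟨mul_nonneg ht hσ.1.le, mul_le_of_le_one_right ht hσ.2⟩
  rw [← mul_sub, norm_mul, Real.norm_eq_abs, Real.norm_eq_abs,
    abs_of_nonneg (rpow_nonneg hσ.1.le _)]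
  calc σ ^ (a + 1) * |h₁ (t * σ) - h₂ (t * σ)| ≤ 1 * c :=
        mul_le_mul (rpow_le_one hσ.1.le hσ.2 (by linarith)) h4 (abs_nonneg _) zero_le_one
    _ = c := one_mul c

lemma continuous_weightExp (ha : 0 < a) (lam : ℝ) : Continuous (weightExp lam a) := by
  have : Continuous fun t : ℝ => t ^ (a + 1) := Real.continuous_rpow_const (by linarith)
  exact (continuous_const.mul this).div_const _

lemma weightExp_nonneg {lam : ℝ} (ha : 0 < a) (hlam : 0 ≤ lam) {t : ℝ} (ht : 0 ≤ t) :
    0 ≤ weightExp lam a t :=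
  div_nonneg (mul_nonneg hlam (rpow_nonneg ht _)) (by linarith)

lemma weightExp_mono {lam : ℝ} (ha : 0 < a) (hlam : 0 ≤ lam) {s t : ℝ} (hs : 0 ≤ s)
    (hst : s ≤ t) : weightExp lam a s ≤ weightExp lam a t := by
  unfold weightExp
  have : s ^ (a + 1) ≤ t ^ (a + 1) := rpow_le_rpow hs hst (by linarith)
  have ha' : 0 < a + 1 := by linarith
  gcongr

lemma hasDerivAt_radialPotential (ha : 0 < a) (hh : Continuous h) (r : ℝ) :
    HasDerivAt (radialPotential A a h) (radialField A a h r) r :=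
  have hc := continuous_radialField (A := A) ha hh
  intervalIntegral.integral_hasDerivAt_right (hc.intervalIntegrable _ _)
    (hc.stronglyMeasurableAtFilter _ _) hc.continuousAt

lemma continuous_radialPotential (ha : 0 < a) (hh : Continuous h) :
    Continuous (radialPotential A a h) :=
  continuous_iff_continuousAt.2 fun r => (hasDerivAt_radialPotential ha hh r).continuousAt

@[simp] lemma radialPotential_zero : radialPotential A a h 0 = 0 := by
  simp [radialPotential]

lemma monotoneOn_radialPotential (hA : 0 ≤ A) (ha : 0 < a) (hh : Continuous h)
    (hpos : ∀ s, 0 ≤ s → 0 ≤ h s) : MonotoneOn (radialPotential A a h) (Ici 0) := by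
  refine monotoneOn_of_deriv_nonneg (convex_Ici 0) (continuous_radialPotential ha hh).continuousOn
    (fun r _ => (hasDerivAt_radialPotential ha hh r).differentiableAt.differentiableWithinAt) ?_
  intro r hr
  rw [interior_Ici] at hr
  rw [(hasDerivAt_radialPotential ha hh r).deriv]
  exact radialField_nonneg hA hpos (le_of_lt hr)

lemma contDiff_radialPotential (ha : 0 < a) (hh : Continuous h) :
    ContDiff ℝ 1 (radialPotential A a h) := by
  refine contDiff_one_iff_deriv.2 ⟨fun r =>
    (hasDerivAt_radialPotential ha hh r).differentiableAt, ?_⟩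
  rw [funext fun r => (hasDerivAt_radialPotential (A := A) ha hh r).deriv]
  exact continuous_radialField ha hh

/-- The Volterra estimate in the exponentially weighted norm. -/
lemma abs_radialPotential_sub_le (hA : 0 ≤ A) (ha : 0 < a) (h₁c : Continuous h₁)
    (h₂c : Continuous h₂) {lam d R : ℝ} (hlam : 0 < lam) (hd : 0 ≤ d)
    (hdiff : ∀ s ∈ Icc 0 R, |h₁ s - h₂ s| ≤ d * exp (weightExp lam a s)) {r : ℝ}
    (hr : r ∈ Icc 0 R) :
    |radialPotential A a h₁ r - radialPotential A a h₂ r|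
      ≤ A * d / lam * exp (weightExp lam a r) := by
  have hc₁ := continuous_radialField (A := A) ha h₁c
  have hc₂ := continuous_radialField (A := A) ha h₂c
  have hw := continuous_weightExp ha lam
  have hpow : Continuous fun t : ℝ => t ^ a := Real.continuous_rpow_const ha.le
  have hbd : Continuous fun t : ℝ => A * t ^ a * (d * exp (weightExp lam a t)) := by
    fun_prop
  have hderiv : ∀ t ∈ uIcc 0 r,
      HasDerivAt (fun t => A * d / lam * exp (weightExp lam a t))
        (A * t ^ a * (d * exp (weightExp lam a t))) t := by
    intro t _
    have h1 : HasDerivAt (weightExp lam a) (lam * t ^ a) t := by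
      have h2 := ((Real.hasDerivAt_rpow_const (x := t) (p := a + 1)
        (Or.inr (by linarith))).const_mul lam).div_const (a + 1)
      have h3 : lam * ((a + 1) * t ^ (a + 1 - 1)) / (a + 1) = lam * t ^ a := by
        rw [add_sub_cancel_right]; field_simp
      rw [h3] at h2
      exact h2
    have h2 : A * t ^ a * (d * exp (weightExp lam a t))
        = A * d / lam * (exp (weightExp lam a t) * (lam * t ^ a)) := by
      field_simp
    rw [h2]
    exact h1.exp.const_mul (A * d / lam)
  rw [radialPotential, radialPotential,
    ← intervalIntegral.integral_sub (hc₁.intervalIntegrable _ _) (hc₂.intervalIntegrable _ _)]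
  calc |∫ t in (0:ℝ)..r, (radialField A a h₁ t - radialField A a h₂ t)|
      ≤ ∫ t in (0:ℝ)..r, A * t ^ a * (d * exp (weightExp lam a t)) := by
        rw [← Real.norm_eq_abs]
        refine intervalIntegral.norm_integral_le_of_norm_le hr.1
          (Filter.Eventually.of_forall fun t ht => ?_) (hbd.intervalIntegrable _ _)
        refine abs_radialField_sub_le hA ha h₁c h₂c ht.1.le fun s hs => ?_
        refine (hdiff s ⟨hs.1, hs.2.trans (ht.2.trans hr.2)⟩).trans ?_
        gcongr
        exact weightExp_mono ha hlam.le hs.1 hs.2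
    _ = A * d / lam * exp (weightExp lam a r) - A * d / lam * exp (weightExp lam a 0) :=
        intervalIntegral.integral_eq_sub_of_hasDerivAt hderiv (hbd.intervalIntegrable _ _)
    _ ≤ A * d / lam * exp (weightExp lam a r) := sub_le_self _ (by positivity)

lemma radialPotential_eqOn_of_lipschitz (hA : 0 ≤ A) (ha : 0 < a) (h₁c : Continuous h₁)
    (h₂c : Continuous h₂) {L R : ℝ} (hL : 0 ≤ L)
    (hlip : ∀ s ∈ Icc 0 R,
      |h₁ s - h₂ s| ≤ L * |radialPotential A a h₁ s - radialPotential A a h₂ s|) :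
    EqOn (radialPotential A a h₁) (radialPotential A a h₂) (Icc 0 R) := by
  intro s hs
  have hlam : 0 < A * L + 1 := by positivity
  set lam := A * L + 1 with hlam_def
  have hP₁ := continuous_radialPotential (A := A) ha h₁c
  have hP₂ := continuous_radialPotential (A := A) ha h₂c
  have hw := continuous_weightExp ha lam
  obtain ⟨s₀, hs₀, hmax⟩ := isCompact_Icc.exists_isMaxOn ⟨s, hs⟩
    (f := fun s => exp (-weightExp lam a s) *
      |radialPotential A a h₁ s - radialPotential A a h₂ s|)
    (Continuous.continuousOn (by fun_prop))
  set d := exp (-weightExp lam a s₀) *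
    |radialPotential A a h₁ s₀ - radialPotential A a h₂ s₀| with hd_def
  have hd : 0 ≤ d := by positivity
  have hle : ∀ t ∈ Icc 0 R, |radialPotential A a h₁ t - radialPotential A a h₂ t|
      ≤ d * exp (weightExp lam a t) := by
    intro t ht
    have h1 : exp (-weightExp lam a t) *
      |radialPotential A a h₁ t - radialPotential A a h₂ t| ≤ d := hmax ht
    calc |radialPotential A a h₁ t - radialPotential A a h₂ t|
        = (exp (-weightExp lam a t) * |radialPotential A a h₁ t - radialPotential A a h₂ t|)
            * exp (weightExp lam a t) := by
          rw [mul_right_comm, ← Real.exp_add, neg_add_cancel, Real.exp_zero, one_mul]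
      _ ≤ _ := by gcongr
  have h2 := abs_radialPotential_sub_le (d := L * d) hA ha h₁c h₂c hlam (by positivity)
    (fun t ht => (hlip t ht).trans (by
      rw [mul_assoc]; exact mul_le_mul_of_nonneg_left (hle t ht) hL)) hs₀
  have h3 : d ≤ A * (L * d) / lam := by
    calc d ≤ exp (-weightExp lam a s₀) * (A * (L * d) / lam * exp (weightExp lam a s₀)) := by
          rw [hd_def]; gcongr
      _ = A * (L * d) / lam := by
          rw [mul_left_comm, ← Real.exp_add, neg_add_cancel, Real.exp_zero, mul_one]
  have h4 : d = 0 := by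
    rw [le_div_iff₀ hlam] at h3
    nlinarith
  have h5 := hle s hs
  rw [h4, zero_mul] at h5
  exact sub_eq_zero.1 (abs_nonpos_iff.1 h5)

/-- Two solutions whose nonlinearities both agree with `g` up to the level `b`, and are bounded by
`g b` beyond it, have sources which differ by at most `g b`. -/
lemma abs_source_sub_le (hA : 0 ≤ A) (ha : 0 < a) (h₁c : Continuous h₁) (h₂c : Continuous h₂)
    {g g₁ g₂ : ℝ → ℝ} {U₀ b L : ℝ} (hL : 0 ≤ L)
    (hlip : ∀ u ∈ Icc U₀ b, ∀ v ∈ Icc U₀ b, |g u - g v| ≤ L * |u - v|)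
    (hgb : 0 ≤ g b)
    (hpos₁ : ∀ u, 0 ≤ g₁ u) (hpos₂ : ∀ u, 0 ≤ g₂ u)
    (heq₁ : ∀ u ∈ Icc U₀ b, g₁ u = g u) (heq₂ : ∀ u ∈ Icc U₀ b, g₂ u = g u)
    (hle₁ : ∀ u, b ≤ u → g₁ u ≤ g b) (hle₂ : ∀ u, b ≤ u → g₂ u ≤ g b)
    (hs₁ : ∀ r, 0 ≤ r → h₁ r = g₁ (U₀ + radialPotential A a h₁ r))
    (hs₂ : ∀ r, 0 ≤ r → h₂ r = g₂ (U₀ + radialPotential A a h₂ r)) {r : ℝ} (hr : 0 ≤ r) :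
    |h₁ r - h₂ r| ≤ g b := by
  have hn₁ : ∀ s, 0 ≤ s → 0 ≤ h₁ s := fun s hs => by rw [hs₁ s hs]; exact hpos₁ _
  have hn₂ : ∀ s, 0 ≤ s → 0 ≤ h₂ s := fun s hs => by rw [hs₂ s hs]; exact hpos₂ _
  have hm₁ := monotoneOn_radialPotential hA ha h₁c hn₁
  have hm₂ := monotoneOn_radialPotential hA ha h₂c hn₂
  have hc₁ := continuous_radialPotential (A := A) ha h₁c
  have hc₂ := continuous_radialPotential (A := A) ha h₂c
  have hp₁ : ∀ s, 0 ≤ s → 0 ≤ radialPotential A a h₁ s := fun s hs => by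
    simpa using hm₁ (mem_Ici.2 le_rfl) (mem_Ici.2 hs) hs
  have hp₂ : ∀ s, 0 ≤ s → 0 ≤ radialPotential A a h₂ s := fun s hs => by
    simpa using hm₂ (mem_Ici.2 le_rfl) (mem_Ici.2 hs) hs
  have hagree : ∀ t, 0 ≤ t → U₀ + radialPotential A a h₁ t ≤ b →
      U₀ + radialPotential A a h₂ t ≤ b →
      radialPotential A a h₁ t = radialPotential A a h₂ t := by
    intro t ht hb₁ hb₂
    refine radialPotential_eqOn_of_lipschitz hA ha h₁c h₂c hL (R := t) ?_ ⟨ht, le_rfl⟩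
    intro s hs
    have e₁ : U₀ + radialPotential A a h₁ s ∈ Icc U₀ b :=
      ⟨by linarith [hp₁ s hs.1], by linarith [hm₁ (mem_Ici.2 hs.1) (mem_Ici.2 ht) hs.2]⟩
    have e₂ : U₀ + radialPotential A a h₂ s ∈ Icc U₀ b :=
      ⟨by linarith [hp₂ s hs.1], by linarith [hm₂ (mem_Ici.2 hs.1) (mem_Ici.2 ht) hs.2]⟩
    rw [hs₁ s hs.1, hs₂ s hs.1, heq₁ _ e₁, heq₂ _ e₂]
    simpa using hlip _ e₁ _ e₂
  have hbig : b ≤ U₀ + radialPotential A a h₁ r → b ≤ U₀ + radialPotential A a h₂ r →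
      |h₁ r - h₂ r| ≤ g b := by
    intro hb₁ hb₂
    have f₁ := hle₁ _ hb₁
    have f₂ := hle₂ _ hb₂
    rw [← hs₁ r hr] at f₁
    rw [← hs₂ r hr] at f₂
    rw [abs_le]
    constructor <;> linarith [hn₁ r hr, hn₂ r hr]
  rcases le_total (U₀ + radialPotential A a h₁ r) b with hb₁ | hb₁ <;>
    rcases le_total (U₀ + radialPotential A a h₂ r) b with hb₂ | hb₂
  · have e := hagree r hr hb₁ hb₂
    have m : U₀ + radialPotential A a h₂ r ∈ Icc U₀ b := ⟨by linarith [hp₂ r hr], hb₂⟩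
    rw [hs₁ r hr, hs₂ r hr, e, heq₁ _ m, heq₂ _ m]
    simpa using hgb
  · refine hbig ?_ hb₂
    obtain ⟨t, ht, htb⟩ := intermediate_value_Icc hr
      (f := fun s => U₀ + radialPotential A a h₂ s) (by fun_prop)
      (show b ∈ Icc _ _ from ⟨by simpa using by linarith [hp₁ r hr], hb₂⟩)
    have h1 := hm₁ (mem_Ici.2 ht.1) (mem_Ici.2 hr) ht.2
    have h2 := hagree t ht.1 (by linarith) htb.le
    simp only at htb
    linarith
  · refine hbig hb₁ ?_
    obtain ⟨t, ht, htb⟩ := intermediate_value_Icc hr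
      (f := fun s => U₀ + radialPotential A a h₁ s) (by fun_prop)
      (show b ∈ Icc _ _ from ⟨by simpa using by linarith [hp₂ r hr], hb₁⟩)
    have h1 := hm₂ (mem_Ici.2 ht.1) (mem_Ici.2 hr) ht.2
    have h2 := hagree t ht.1 htb.le (by linarith)
    simp only at htb
    linarith
  · exact hbig hb₁ hb₂

/-- The integrated problem with a bounded Lipschitz nonlinearity has a global solution. -/
lemma exists_source_of_lipschitz (hA : 0 ≤ A) (ha : 0 < a) {G : ℝ → ℝ} {L M : ℝ} (hL : 0 ≤ L)
    (hlip : ∀ u v, |G u - G v| ≤ L * |u - v|) (hM : ∀ u, |G u| ≤ M) (U₀ : ℝ) :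
    ∃ h : ℝ → ℝ, Continuous h ∧ ∀ r, 0 ≤ r → h r = G (U₀ + radialPotential A a h r) := by
  have hGc : Continuous G :=
    (LipschitzWith.of_dist_le_mul (K := ⟨L, hL⟩) fun u v => hlip u v).continuous
  have hlam : 0 < 2 * (A * L) + 1 := by positivity
  set lam := 2 * (A * L) + 1 with hlam_def
  have hw := continuous_weightExp ha lam
  let src : BoundedContinuousFunction ℝ ℝ → ℝ → ℝ := fun Y s => exp (weightExp lam a s) * Y s
  have hsrc : ∀ Y, Continuous (src Y) := fun Y => by
    have := Y.continuous
    simp only [src]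
    fun_prop
  let Ψ : BoundedContinuousFunction ℝ ℝ → BoundedContinuousFunction ℝ ℝ := fun Y =>
    BoundedContinuousFunction.ofNormedAddCommGroup
      (fun r => exp (-weightExp lam a (max r 0)) *
        G (U₀ + radialPotential A a (src Y) (max r 0)))
      (by
        have := continuous_radialPotential (A := A) ha (hsrc Y)
        fun_prop)
      M
      (by
        intro r
        have h1 : exp (-weightExp lam a (max r 0)) ≤ 1 :=
          Real.exp_le_one_iff.2 (neg_nonpos.2 (weightExp_nonneg ha hlam.le (le_max_right _ _)))
        rw [norm_mul, Real.norm_of_nonneg (exp_pos _).le, Real.norm_eq_abs]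
        calc _ ≤ 1 * M := mul_le_mul h1 (hM _) (abs_nonneg _) zero_le_one
          _ = M := one_mul M)
  have hΨ : ContractingWith (1 / 2) Ψ := by
    refine ⟨by rw [← NNReal.coe_lt_coe]; norm_num, LipschitzWith.of_dist_le_mul fun Y Z => ?_⟩
    refine (BoundedContinuousFunction.dist_le (by positivity)).2 fun r => ?_
    have hr : 0 ≤ max r 0 := le_max_right _ _
    have h1 := abs_radialPotential_sub_le (d := dist Y Z) (R := max r 0) hA ha (hsrc Y) (hsrc Z)
      hlam dist_nonneg (fun s _ => by
        have h2 : |Y s - Z s| ≤ dist Y Z := by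
          rw [← Real.dist_eq]
          exact BoundedContinuousFunction.dist_coe_le_dist s
        simp only [src]
        rw [← mul_sub, abs_mul, abs_of_pos (exp_pos _), mul_comm]
        gcongr) ⟨hr, le_rfl⟩
    have h3 := hlip (U₀ + radialPotential A a (src Y) (max r 0))
      (U₀ + radialPotential A a (src Z) (max r 0))
    rw [add_sub_add_left_eq_sub] at h3
    have h4 : dist (Ψ Y r) (Ψ Z r) = exp (-weightExp lam a (max r 0)) *
        |G (U₀ + radialPotential A a (src Y) (max r 0))
          - G (U₀ + radialPotential A a (src Z) (max r 0))| := by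
      rw [Real.dist_eq]
      simp only [Ψ, BoundedContinuousFunction.coe_ofNormedAddCommGroup]
      rw [← mul_sub, abs_mul, abs_of_pos (exp_pos _)]
    rw [h4]
    calc _ ≤ exp (-weightExp lam a (max r 0)) *
          (L * (A * dist Y Z / lam * exp (weightExp lam a (max r 0)))) := by
          gcongr
          exact h3.trans (by gcongr)
      _ = exp (-weightExp lam a (max r 0) + weightExp lam a (max r 0)) *
          (A * L / lam) * dist Y Z := by
          rw [Real.exp_add]; ring
      _ ≤ 1 / 2 * dist Y Z := by
          rw [neg_add_cancel, Real.exp_zero, one_mul]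
          refine mul_le_mul_of_nonneg_right ?_ dist_nonneg
          rw [div_le_iff₀ hlam]
          linarith
      _ = _ := by simp
  have hfix : Ψ (hΨ.fixedPoint Ψ) = hΨ.fixedPoint Ψ := hΨ.fixedPoint_isFixedPt
  set Y := hΨ.fixedPoint Ψ
  refine ⟨src Y, hsrc Y, fun r hr => ?_⟩
  have h5 : Y r = exp (-weightExp lam a (max r 0)) *
      G (U₀ + radialPotential A a (src Y) (max r 0)) := by
    conv_lhs => rw [← hfix]
    rfl
  rw [max_eq_left hr] at h5
  calc src Y r = exp (weightExp lam a r) * Y r := rfl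
    _ = _ := by
      rw [h5, ← mul_assoc, ← Real.exp_add, add_neg_cancel, Real.exp_zero, one_mul]

/-- Global existence for an antitone nonlinearity which is locally Lipschitz below `E₀` and
vanishes at `E₀`. -/
lemma exists_source_of_antitone (hA : 0 ≤ A) (ha : 0 < a) {g : ℝ → ℝ} {U₀ E₀ : ℝ}
    (hg : Continuous g) (hanti : Antitone g) (hpos : ∀ u, 0 ≤ g u) (hE₀ : g E₀ = 0)
    (hlip : ∀ b < E₀, ∃ L, 0 ≤ L ∧
      ∀ u ∈ Icc U₀ b, ∀ v ∈ Icc U₀ b, |g u - g v| ≤ L * |u - v|) :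
    ∃ h : ℝ → ℝ, Continuous h ∧ ∀ r, 0 ≤ r → h r = g (U₀ + radialPotential A a h r) := by
  obtain ⟨b, hbmono, hbE₀, hblim⟩ := exists_seq_strictMono_tendsto E₀
  choose L hL hLip using fun n => hlip (b n) (hbE₀ n)
  let G : ℕ → ℝ → ℝ := fun n u => g (max U₀ (min u (b n)))
  have hGpos : ∀ n u, 0 ≤ G n u := fun n u => hpos _
  have hGlip : ∀ n u v, |G n u - G n v| ≤ L n * |u - v| := by
    intro n u v
    rcases lt_or_ge (b n) U₀ with hb | hb
    · have h1 : ∀ x, G n x = g U₀ := fun x => by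
        simp only [G]
        rw [max_eq_left ((min_le_right _ _).trans hb.le)]
      rw [h1, h1, sub_self, abs_zero]
      exact mul_nonneg (hL n) (abs_nonneg _)
    · have hm : ∀ x, max U₀ (min x (b n)) ∈ Icc U₀ (b n) := fun x =>
        ⟨le_max_left _ _, max_le hb (min_le_right _ _)⟩
      refine (hLip n _ (hm u) _ (hm v)).trans (mul_le_mul_of_nonneg_left ?_ (hL n))
      refine (abs_max_sub_max_le_max _ _ _ _).trans (max_le (by simp) ?_)
      exact (abs_min_sub_min_le_max _ _ _ _).trans (max_le le_rfl (by simp))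
  have hGbd : ∀ n u, |G n u| ≤ g U₀ := fun n u => by
    rw [abs_of_nonneg (hGpos n u)]
    exact hanti (le_max_left _ _)
  have hGeq : ∀ n m, n ≤ m → ∀ u ∈ Icc U₀ (b n), G m u = g u := fun n m hnm u hu => by
    simp only [G]
    rw [min_eq_left (hu.2.trans (hbmono.monotone hnm)), max_eq_right hu.1]
  have hGle : ∀ n m, n ≤ m → ∀ u, b n ≤ u → G m u ≤ g (b n) := fun n m hnm u hu =>
    hanti ((le_min hu (hbmono.monotone hnm)).trans (le_max_right _ _))
  choose f hfc hfs using fun n => exists_source_of_lipschitz hA ha (hL n) (hGlip n) (hGbd n) U₀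
  have hdiff : ∀ n m, n ≤ m → ∀ r, 0 ≤ r → |f n r - f m r| ≤ g (b n) := fun n m hnm r hr =>
    abs_source_sub_le hA ha (hfc n) (hfc m) (hL n) (hLip n) (hpos _) (hGpos n) (hGpos m)
      (hGeq n n le_rfl) (hGeq n m hnm) (hGle n n le_rfl) (hGle n m hnm) (hfs n) (hfs m) hr
  have hδ : Filter.Tendsto (fun n => g (b n)) Filter.atTop (nhds 0) := by
    rw [← hE₀]
    exact (hg.tendsto E₀).comp hblim
  have hlimit : ∀ r, ∃ y, Filter.Tendsto (fun n => f n (max r 0)) Filter.atTop (nhds y) :=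
    fun r => cauchySeq_tendsto_of_complete <| cauchySeq_of_le_tendsto_0' (fun n => g (b n))
      (fun n m hnm => hdiff n m hnm _ (le_max_right _ _)) hδ
  choose h hh using hlimit
  have hclose : ∀ n r, |f n (max r 0) - h r| ≤ g (b n) := fun n r =>
    le_of_tendsto ((tendsto_const_nhds.sub (hh r)).abs) <|
      (Filter.eventually_ge_atTop n).mono fun m hm => hdiff n m hm _ (le_max_right _ _)
  have hunif : TendstoUniformly (fun n r => f n (max r 0)) h Filter.atTop := by
    rw [Metric.tendstoUniformly_iff]
    intro ε hε
    filter_upwards [hδ.eventually_lt_const hε] with n hn r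
    rw [dist_comm]
    exact (hclose n r).trans_lt hn
  have hcont : Continuous h := hunif.continuous <| Filter.Frequently.of_forall fun n =>
    (hfc n).comp (continuous_id.max continuous_const)
  refine ⟨h, hcont, fun r hr => ?_⟩
  have hpot : Filter.Tendsto (fun n => U₀ + radialPotential A a (f n) r) Filter.atTop
      (nhds (U₀ + radialPotential A a h r)) := by
    refine tendsto_const_nhds.add (tendsto_iff_dist_tendsto_zero.2 ?_)
    refine squeeze_zero (fun n => dist_nonneg) (g := fun n =>
      A * g (b n) / 1 * exp (weightExp 1 a r)) (fun n => ?_) ?_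
    · refine abs_radialPotential_sub_le hA ha (hfc n) hcont one_pos (hpos _) (R := r) ?_
        ⟨hr, le_rfl⟩
      intro s hs
      have h1 := hclose n s
      rw [max_eq_left hs.1] at h1
      exact h1.trans (le_mul_of_one_le_right (hpos _)
        (one_le_exp (weightExp_nonneg ha zero_le_one hs.1)))
    · simpa using ((hδ.const_mul A).div_const 1).mul_const (exp (weightExp 1 a r))
  have hfr : Filter.Tendsto (fun n => f n r) Filter.atTop (nhds (h r)) := by
    simpa [max_eq_left hr] using hh r
  have hgf : Filter.Tendsto (fun n => f n r - g (U₀ + radialPotential A a (f n) r)) Filter.atTop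
      (nhds 0) := by
    refine squeeze_zero_norm (fun n => ?_) hδ
    have hpn : 0 ≤ radialPotential A a (f n) r := by
      simpa using monotoneOn_radialPotential hA ha (hfc n)
        (fun s hs => by rw [hfs n s hs]; exact hGpos _ _) (mem_Ici.2 le_rfl) (mem_Ici.2 hr) hr
    rw [hfs n r hr, Real.norm_eq_abs]
    set u := U₀ + radialPotential A a (f n) r
    rcases le_total u (b n) with hu | hu
    · rw [hGeq n n le_rfl u ⟨by simp only [u]; linarith, hu⟩, sub_self, abs_zero]
      exact hpos _
    · have h1 := hGle n n le_rfl u hu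
      have h2 := hanti hu
      rw [abs_le]
      constructor <;> linarith [hGpos n u, hpos u]
  exact sub_eq_zero.1 (tendsto_nhds_unique (hfr.sub ((hg.tendsto _).comp hpot)) hgf)

lemma source_unique_of_antitone (hA : 0 ≤ A) (ha : 0 < a) (h₁c : Continuous h₁)
    (h₂c : Continuous h₂) {g : ℝ → ℝ} {U₀ E₀ : ℝ}
    (hg : Continuous g) (hanti : Antitone g) (hpos : ∀ u, 0 ≤ g u) (hE₀ : g E₀ = 0)
    (hlip : ∀ b < E₀, ∃ L, 0 ≤ L ∧
      ∀ u ∈ Icc U₀ b, ∀ v ∈ Icc U₀ b, |g u - g v| ≤ L * |u - v|)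
    (hs₁ : ∀ r, 0 ≤ r → h₁ r = g (U₀ + radialPotential A a h₁ r))
    (hs₂ : ∀ r, 0 ≤ r → h₂ r = g (U₀ + radialPotential A a h₂ r)) :
    EqOn (radialPotential A a h₁) (radialPotential A a h₂) (Ici 0) := by
  obtain ⟨b, -, hbE₀, hblim⟩ := exists_seq_strictMono_tendsto E₀
  have heq : ∀ s, 0 ≤ s → |h₁ s - h₂ s| ≤ 0 := by
    intro s hs
    have hδ : Filter.Tendsto (fun n => g (b n)) Filter.atTop (nhds 0) := by
      rw [← hE₀]
      exact (hg.tendsto E₀).comp hblim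
    refine ge_of_tendsto' hδ fun n => ?_
    obtain ⟨L, hL, hLip⟩ := hlip (b n) (hbE₀ n)
    exact abs_source_sub_le hA ha h₁c h₂c hL hLip (hpos _) hpos hpos (fun _ _ => rfl)
      (fun _ _ => rfl) (fun _ hu => hanti hu) (fun _ hu => hanti hu) hs₁ hs₂ hs
  intro r hr
  exact radialPotential_eqOn_of_lipschitz hA ha h₁c h₂c le_rfl (R := r)
    (fun s hs => by simpa using heq s hs.1) ⟨hr, le_rfl⟩

end Radial

/-- The moment `u ↦ ∫ φ(E) (E - u)₊ ^ p dE` over `[c, E₀]`. -/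
noncomputable def truncMoment (φ : ℝ → ℝ) (c E₀ p u : ℝ) : ℝ :=
  ∫ E in c..E₀, φ E * max (E - u) 0 ^ p

section Moment

variable {φ : ℝ → ℝ} {c E₀ p : ℝ}

lemma continuous_max_sub_rpow (hp : 0 < p) (u : ℝ) :
    Continuous fun E : ℝ => max (E - u) 0 ^ p := by
  have : Continuous fun x : ℝ => x ^ p := Real.continuous_rpow_const hp.le
  exact this.comp (by fun_prop)

lemma max_sub_rpow_anti (hp : 0 < p) (E : ℝ) {u v : ℝ} (huv : u ≤ v) :
    max (E - v) 0 ^ p ≤ max (E - u) 0 ^ p :=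
  rpow_le_rpow (le_max_right _ _) (max_le_max_right _ (by linarith)) hp.le

lemma intervalIntegrable_truncMoment (hp : 0 < p) {x y : ℝ}
    (hφ : IntervalIntegrable φ volume x y) (u : ℝ) :
    IntervalIntegrable (fun E => φ E * max (E - u) 0 ^ p) volume x y :=
  hφ.mul_continuousOn (continuous_max_sub_rpow hp u).continuousOn

lemma truncMoment_nonneg (hcE : c ≤ E₀) (hnonneg : ∀ E, 0 ≤ φ E) (u : ℝ) :
    0 ≤ truncMoment φ c E₀ p u :=
  intervalIntegral.integral_nonneg hcE fun E _ =>
    mul_nonneg (hnonneg E) (rpow_nonneg (le_max_right _ _) _)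

lemma truncMoment_antitone (hcE : c ≤ E₀) (hp : 0 < p) (hnonneg : ∀ E, 0 ≤ φ E)
    (hφ : IntervalIntegrable φ volume c E₀) : Antitone (truncMoment φ c E₀ p) :=
  fun u v huv => intervalIntegral.integral_mono_on hcE (intervalIntegrable_truncMoment hp hφ v)
    (intervalIntegrable_truncMoment hp hφ u) fun E _ =>
      mul_le_mul_of_nonneg_left (max_sub_rpow_anti hp E huv) (hnonneg E)

lemma truncMoment_eq_zero (hcE : c ≤ E₀) (hp : 0 < p) {u : ℝ} (hu : E₀ ≤ u) :
    truncMoment φ c E₀ p u = 0 := by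
  refine intervalIntegral.integral_zero_ae (Filter.Eventually.of_forall fun E hE => ?_)
  rw [uIoc_of_le hcE] at hE
  rw [max_eq_right (by linarith [hE.2]), zero_rpow hp.ne', mul_zero]

lemma continuous_truncMoment (hp : 0 < p) (hnonneg : ∀ E, 0 ≤ φ E)
    (hφ : IntervalIntegrable φ volume c E₀) : Continuous (truncMoment φ c E₀ p) := by
  refine continuous_iff_continuousAt.2 fun u₀ => ?_
  refine intervalIntegral.continuousAt_of_dominated_interval
    (bound := fun E => φ E * max (E - (u₀ - 1)) 0 ^ p) ?_ ?_
    (intervalIntegrable_truncMoment hp hφ _) ?_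
  · exact Filter.Eventually.of_forall fun u =>
      (intervalIntegrable_iff.1 (intervalIntegrable_truncMoment hp hφ u)).aestronglyMeasurable
  · filter_upwards [lt_mem_nhds (sub_one_lt u₀)] with u hu
    refine Filter.Eventually.of_forall fun E _ => ?_
    rw [Real.norm_of_nonneg (mul_nonneg (hnonneg E) (rpow_nonneg (le_max_right _ _) _))]
    exact mul_le_mul_of_nonneg_left (max_sub_rpow_anti hp E hu.le) (hnonneg E)
  · refine Filter.Eventually.of_forall fun E _ => ?_
    have : Continuous fun x : ℝ => x ^ p := Real.continuous_rpow_const hp.le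
    have h2 : Continuous fun u : ℝ => max (E - u) 0 ^ p := this.comp (by fun_prop)
    exact (continuous_const.mul h2).continuousAt

lemma integral_eq_truncMoment (hcE : c ≤ E₀) (hp : 0 < p)
    (hφ : IntervalIntegrable φ volume c E₀) (hvanish : ∀ E, E₀ ≤ E → φ E = 0) {u : ℝ}
    (hu : c ≤ u) :
    ∫ E in u..E₀, φ E * (E - u) ^ p = truncMoment φ c E₀ p u := by
  rcases le_total u E₀ with huE | huE
  · have h1 : IntervalIntegrable φ volume c u :=
      hφ.mono_set (by rw [uIcc_of_le hu, uIcc_of_le hcE]; exact Icc_subset_Icc_right huE)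
    have h2 : IntervalIntegrable φ volume u E₀ :=
      hφ.mono_set (by rw [uIcc_of_le huE, uIcc_of_le hcE]; exact Icc_subset_Icc_left hu)
    rw [truncMoment, ← intervalIntegral.integral_add_adjacent_intervals
      (intervalIntegrable_truncMoment hp h1 u) (intervalIntegrable_truncMoment hp h2 u)]
    have h3 : ∫ E in c..u, φ E * max (E - u) 0 ^ p = 0 := truncMoment_eq_zero hu hp le_rfl
    rw [h3, zero_add]
    refine intervalIntegral.integral_congr fun E hE => ?_
    rw [uIcc_of_le huE] at hE
    simp only [max_eq_left (sub_nonneg.2 hE.1)]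
  · rw [truncMoment_eq_zero hcE hp huE]
    refine intervalIntegral.integral_zero_ae (Filter.Eventually.of_forall fun E hE => ?_)
    rw [uIoc_of_ge huE] at hE
    rw [hvanish E hE.1.le, zero_mul]

lemma integral_moment_nonneg (hnonneg : ∀ E, 0 ≤ φ E) (hvanish : ∀ E, E₀ ≤ E → φ E = 0)
    (u : ℝ) : 0 ≤ ∫ E in u..E₀, φ E * (E - u) ^ p := by
  rcases le_total u E₀ with huE | huE
  · exact intervalIntegral.integral_nonneg huE fun E hE =>
      mul_nonneg (hnonneg E) (rpow_nonneg (sub_nonneg.2 hE.1) _)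
  · refine (intervalIntegral.integral_zero_ae (Filter.Eventually.of_forall fun E hE => ?_)).ge
    rw [uIoc_of_ge huE] at hE
    rw [hvanish E hE.1.le, zero_mul]

lemma exists_lipschitz_rpow_Icc (p : ℝ) {x₀ x₁ : ℝ} (hx₀ : 0 < x₀) :
    ∃ K, 0 ≤ K ∧ ∀ x ∈ Icc x₀ x₁, ∀ y ∈ Icc x₀ x₁, |x ^ p - y ^ p| ≤ K * |x - y| := by
  have hc : ContinuousOn (fun x : ℝ => p * x ^ (p - 1)) (Icc x₀ x₁) :=
    continuousOn_const.mul (ContinuousOn.rpow_const continuousOn_id fun x hx =>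
      Or.inl (hx₀.trans_le hx.1).ne')
  obtain ⟨K, hK⟩ := isCompact_Icc.exists_bound_of_continuousOn hc
  refine ⟨max K 0, le_max_right _ _, fun x hx y hy => ?_⟩
  exact (convex_Icc x₀ x₁).norm_image_sub_le_of_norm_hasDerivWithin_le
    (f := fun x : ℝ => x ^ p) (f' := fun x : ℝ => p * x ^ (p - 1))
    (fun z hz => (Real.hasDerivAt_rpow_const
      (Or.inl (hx₀.trans_le hz.1).ne')).hasDerivWithinAt)
    (fun z hz => (hK z hz).trans (le_max_left _ _)) hy hx

/-- The translates of `x ↦ x₊ ^ p` are Lipschitz in `L¹`, even where `p < 1`. -/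
lemma abs_integral_max_sub_rpow_sub_le (hp : 0 < p) {e D u v : ℝ} (hD : 0 ≤ D)
    (hc : c ≤ e) (hu : e - u ≤ D) (hv : e - v ≤ D) :
    |(∫ E in c..e, max (E - u) 0 ^ p) - ∫ E in c..e, max (E - v) 0 ^ p|
      ≤ 2 * D ^ p * |u - v| := by
  have hψ : Continuous fun x : ℝ => max x 0 ^ p := by
    simpa using continuous_max_sub_rpow hp 0
  have hbd : ∀ x y, x ≤ D → y ≤ D → |∫ t in x..y, max t 0 ^ p| ≤ D ^ p * |y - x| := by
    intro x y hx hy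
    rw [← Real.norm_eq_abs]
    refine intervalIntegral.norm_integral_le_of_norm_le_const fun t ht => ?_
    have htD : t ≤ D := (uIoc_subset_uIcc ht).2.trans (max_le hx hy)
    rw [Real.norm_of_nonneg (rpow_nonneg (le_max_right _ _) _)]
    exact rpow_le_rpow (le_max_right _ _) (max_le htD hD) hp.le
  rw [intervalIntegral.integral_comp_sub_right (fun x => max x 0 ^ p) u,
    intervalIntegral.integral_comp_sub_right (fun x => max x 0 ^ p) v,
    intervalIntegral.integral_interval_sub_interval_comm (hψ.intervalIntegrable _ _)
      (hψ.intervalIntegrable _ _) (hψ.intervalIntegrable _ _)]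
  refine (abs_sub _ _).trans ?_
  have h1 := hbd (c - u) (c - v) (by linarith) (by linarith)
  have h2 := hbd (e - u) (e - v) hu hv
  rw [show c - v - (c - u) = u - v by ring] at h1
  rw [show e - v - (e - u) = u - v by ring] at h2
  linarith

lemma exists_lipschitz_truncMoment (hp : 0 < p) (hnonneg : ∀ E, 0 ≤ φ E)
    (hφ : IntervalIntegrable φ volume c E₀)
    (hbdd : ∀ e < E₀, ∃ M, 0 ≤ M ∧ ∀ E ∈ Icc c e, φ E ≤ M) {b : ℝ} (hb : b < E₀) :
    ∃ L, 0 ≤ L ∧ ∀ u ∈ Icc c b, ∀ v ∈ Icc c b,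
      |truncMoment φ c E₀ p u - truncMoment φ c E₀ p v| ≤ L * |u - v| := by
  rcases lt_or_ge b c with hbc | hcb
  · exact ⟨0, le_rfl, fun u hu => absurd (hu.1.trans hu.2) (not_le.2 hbc)⟩
  obtain ⟨e, hbe, heE⟩ := exists_between hb
  obtain ⟨M, hM, hφM⟩ := hbdd e heE
  obtain ⟨K, hK, hlip⟩ := exists_lipschitz_rpow_Icc p (x₀ := e - b) (x₁ := E₀ - c) (by linarith)
  have hce : c ≤ e := by linarith
  have hφ₁ : IntervalIntegrable φ volume c e := hφ.mono_set (by
    rw [uIcc_of_le hce, uIcc_of_le (hce.trans heE.le)]; exact Icc_subset_Icc_right heE.le)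
  have hφ₂ : IntervalIntegrable φ volume e E₀ := hφ.mono_set (by
    rw [uIcc_of_le heE.le, uIcc_of_le (hce.trans heE.le)]; exact Icc_subset_Icc_left hce)
  have hI₂ : 0 ≤ ∫ E in e..E₀, φ E :=
    intervalIntegral.integral_nonneg heE.le fun E _ => hnonneg E
  have hD : 0 ≤ E₀ - c := by linarith
  refine ⟨M * (2 * (E₀ - c) ^ p) + K * ∫ E in e..E₀, φ E, by positivity, ?_⟩
  have key : ∀ u ∈ Icc c b, ∀ v ∈ Icc c b, u ≤ v →
      |truncMoment φ c E₀ p u - truncMoment φ c E₀ p v|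
        ≤ (M * (2 * (E₀ - c) ^ p) + K * ∫ E in e..E₀, φ E) * |u - v| := by
    intro u hu v hv huv
    have hint₁ := fun w => intervalIntegrable_truncMoment hp hφ₁ w
    have hint₂ := fun w => intervalIntegrable_truncMoment hp hφ₂ w
    have hcont := fun w => continuous_max_sub_rpow hp w
    have hsplit : truncMoment φ c E₀ p u - truncMoment φ c E₀ p v
        = (∫ E in c..e, (φ E * max (E - u) 0 ^ p - φ E * max (E - v) 0 ^ p))
          + ∫ E in e..E₀, (φ E * max (E - u) 0 ^ p - φ E * max (E - v) 0 ^ p) := by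
      rw [intervalIntegral.integral_sub (hint₁ u) (hint₁ v),
        intervalIntegral.integral_sub (hint₂ u) (hint₂ v), truncMoment, truncMoment,
        ← intervalIntegral.integral_add_adjacent_intervals (hint₁ u) (hint₂ u),
        ← intervalIntegral.integral_add_adjacent_intervals (hint₁ v) (hint₂ v)]
      ring
    have h1 : |∫ E in c..e, (φ E * max (E - u) 0 ^ p - φ E * max (E - v) 0 ^ p)|
        ≤ M * (2 * (E₀ - c) ^ p * |u - v|) := by
      calc _ ≤ ∫ E in c..e, M * (max (E - u) 0 ^ p - max (E - v) 0 ^ p) := by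
            rw [← Real.norm_eq_abs]
            refine intervalIntegral.norm_integral_le_of_norm_le hce
              (Filter.Eventually.of_forall fun E hE => ?_)
              (((hcont u).sub (hcont v)).const_mul M |>.intervalIntegrable _ _)
            have h3 := sub_nonneg.2 (max_sub_rpow_anti hp E huv)
            rw [← mul_sub, Real.norm_of_nonneg (mul_nonneg (hnonneg E) h3)]
            exact mul_le_mul_of_nonneg_right (hφM E ⟨hE.1.le, hE.2⟩) h3
        _ = M * ((∫ E in c..e, max (E - u) 0 ^ p) - ∫ E in c..e, max (E - v) 0 ^ p) := by
            rw [intervalIntegral.integral_const_mul, intervalIntegral.integral_sub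
              ((hcont u).intervalIntegrable _ _) ((hcont v).intervalIntegrable _ _)]
        _ ≤ _ := by
            refine mul_le_mul_of_nonneg_left ((le_abs_self _).trans ?_) hM
            exact abs_integral_max_sub_rpow_sub_le hp hD hce (by linarith [hu.1])
              (by linarith [hv.1])
    have h2 : |∫ E in e..E₀, (φ E * max (E - u) 0 ^ p - φ E * max (E - v) 0 ^ p)|
        ≤ (∫ E in e..E₀, φ E) * (K * |u - v|) := by
      rw [← intervalIntegral.integral_mul_const, ← Real.norm_eq_abs]
      refine intervalIntegral.norm_integral_le_of_norm_le heE.le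
        (Filter.Eventually.of_forall fun E hE => ?_) (hφ₂.mul_const _)
      have hx : ∀ w ∈ Icc c b, E - w ∈ Icc (e - b) (E₀ - c) := fun w hw =>
        ⟨by linarith [hw.2, hE.1], by linarith [hw.1, hE.2]⟩
      have hpos : ∀ w ∈ Icc c b, max (E - w) 0 = E - w := fun w hw =>
        max_eq_left (by linarith [hw.2, hE.1])
      have h3 := hlip _ (hx u hu) _ (hx v hv)
      rw [show E - u - (E - v) = -(u - v) by ring, abs_neg] at h3
      rw [← mul_sub, norm_mul, Real.norm_of_nonneg (hnonneg E), hpos u hu, hpos v hv]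
      exact mul_le_mul_of_nonneg_left h3 (hnonneg E)
    rw [hsplit]
    refine (abs_add_le _ _).trans ((add_le_add h1 h2).trans_eq (by ring))
  intro u hu v hv
  rcases le_total u v with huv | hvu
  · exact key u hu v hv huv
  · rw [abs_sub_comm, abs_sub_comm u v]
    exact key v hv u hu hvu

lemma intervalIntegrable_of_le_rpow {k C : ℝ} (hk : -1 < k) (hmeas : Measurable φ)
    (hnonneg : ∀ E, 0 ≤ φ E) (hcE : c ≤ E₀)
    (hC : ∀ E ∈ Icc c E₀, φ E ≤ C * max (E₀ - E) 0 ^ k) :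
    IntervalIntegrable φ volume c E₀ := by
  have h1 : IntervalIntegrable (fun x : ℝ => x ^ k) volume (E₀ - c) (E₀ - E₀) :=
    intervalIntegral.intervalIntegrable_rpow' hk
  have h2 : IntervalIntegrable (fun E : ℝ => C * (E₀ - E) ^ k) volume c E₀ := by
    simpa using (h1.comp_sub_left E₀).const_mul C
  refine h2.mono_fun hmeas.aestronglyMeasurable ?_
  refine (ae_restrict_mem measurableSet_uIoc).mono fun E hE => ?_
  rw [uIoc_of_le hcE] at hE
  have h3 := hC E ⟨hE.1.le, hE.2⟩
  rw [max_eq_left (sub_nonneg.2 hE.2)] at h3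
  change ‖φ E‖ ≤ ‖C * (E₀ - E) ^ k‖
  rw [Real.norm_of_nonneg (hnonneg E)]
  exact h3.trans (le_abs_self _)

lemma exists_bound_of_le_rpow {k C : ℝ} (hC₀ : 0 ≤ C)
    (hC : ∀ E ∈ Icc c E₀, φ E ≤ C * max (E₀ - E) 0 ^ k) {e : ℝ} (he : e < E₀) :
    ∃ M, 0 ≤ M ∧ ∀ E ∈ Icc c e, φ E ≤ M := by
  have hc : ContinuousOn (fun E : ℝ => (E₀ - E) ^ k) (Icc c e) :=
    ContinuousOn.rpow_const (by fun_prop) fun E hE => Or.inl (by linarith [hE.2])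
  obtain ⟨K, hK⟩ := isCompact_Icc.exists_bound_of_continuousOn hc
  refine ⟨C * max K 0, by positivity, fun E hE => ?_⟩
  have h1 := hC E ⟨hE.1, hE.2.trans he.le⟩
  rw [max_eq_left (by linarith [hE.2])] at h1
  refine h1.trans (mul_le_mul_of_nonneg_left ?_ hC₀)
  exact (le_abs_self _).trans ((hK E hE).trans (le_max_left _ _))

end Moment

lemma couplingConstant_nonneg (l : ℝ) :
    0 ≤ 2 ^ (l + 7 / 2) * π ^ 2 * ∫ s in (0:ℝ)..1, s ^ l * (1 - s) ^ (-(1/2) : ℝ) :=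
  mul_nonneg (by positivity) <| intervalIntegral.integral_nonneg zero_le_one fun s hs =>
    mul_nonneg (rpow_nonneg hs.1 _) (rpow_nonneg (sub_nonneg.2 hs.2) _)

theorem reduced_VP_global_existence_uniqueness
    (E₀ k l : ℝ) (hk : -1 < k) (hl : -(1/2 : ℝ) < l) (hkl : 0 < k + l + 3 / 2)
    (φ : ℝ → ℝ) (hmeas : Measurable φ) (hnonneg : ∀ E, 0 ≤ φ E)
    (hvanish : ∀ E, E₀ ≤ E → φ E = 0)
    (hbound : ∀ K : Set ℝ, IsCompact K →
      ∃ C : ℝ, 0 ≤ C ∧ ∀ E ∈ K, φ E ≤ C * (max (E₀ - E) 0) ^ k)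
    (U₀ : ℝ) :
    ∃ U : ℝ → ℝ, IsReducedVPSolution E₀ l φ U₀ U ∧
      ∀ V : ℝ → ℝ, IsReducedVPSolution E₀ l φ U₀ V → EqOn U V (Ici 0) := by
  have hA := couplingConstant_nonneg l
  unfold IsReducedVPSolution
  set A := 2 ^ (l + 7 / 2) * π ^ 2 * ∫ s in (0:ℝ)..1, s ^ l * (1 - s) ^ (-(1/2) : ℝ)
  have ha : 0 < 2 * l + 1 := by linarith
  have hexp : 2 * l + 2 = 2 * l + 1 + 1 := by ring
  have hp : 0 < l + 1 / 2 := by linarith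
  rw [hexp]
  set a := 2 * l + 1
  set p := l + 1 / 2
  obtain ⟨c, hcU, hcE⟩ : ∃ c, c ≤ U₀ ∧ c ≤ E₀ := ⟨min U₀ E₀, min_le_left _ _, min_le_right _ _⟩
  obtain ⟨C, hC₀, hC⟩ := hbound (Icc c E₀) isCompact_Icc
  have hφ := intervalIntegrable_of_le_rpow hk hmeas hnonneg hcE hC
  have hcont := continuous_truncMoment hp hnonneg hφ
  have hanti := truncMoment_antitone hcE hp hnonneg hφ
  have hpos := truncMoment_nonneg (p := p) hcE hnonneg
  have hzero : truncMoment φ c E₀ p E₀ = 0 := truncMoment_eq_zero hcE hp le_rfl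
  have hlip : ∀ b < E₀, ∃ L, 0 ≤ L ∧ ∀ u ∈ Icc U₀ b, ∀ v ∈ Icc U₀ b,
      |truncMoment φ c E₀ p u - truncMoment φ c E₀ p v| ≤ L * |u - v| := fun b hb => by
    obtain ⟨L, hL, h1⟩ := exists_lipschitz_truncMoment hp hnonneg hφ
      (fun e he => exists_bound_of_le_rpow hC₀ hC he) hb
    exact ⟨L, hL, fun u hu v hv => h1 u ⟨hcU.trans hu.1, hu.2⟩ v ⟨hcU.trans hv.1, hv.2⟩⟩
  have hfield : ∀ (h W : ℝ → ℝ), (∀ s, 0 ≤ s → U₀ ≤ W s) →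
      (∀ s, 0 ≤ s → h s = truncMoment φ c E₀ p (W s)) → ∀ r, 0 < r →
      radialField A a h r = A / r ^ 2 * ∫ s in (0:ℝ)..r, s ^ (a + 1) *
        ∫ E in (W s)..E₀, φ E * (E - W s) ^ p := by
    intro h W hW hh r hr
    rw [radialField_eq A a h hr]
    congr 1
    refine intervalIntegral.integral_congr fun s hs => ?_
    rw [uIcc_of_le hr.le] at hs
    rw [integral_eq_truncMoment hcE hp hφ hvanish (hcU.trans (hW s hs.1)), hh s hs.1]
  obtain ⟨h, hhc, hh⟩ := exists_source_of_antitone hA ha hcont hanti hpos hzero hlip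
  have hpot : ∀ s, 0 ≤ s → U₀ ≤ U₀ + radialPotential A a h s := fun s hs => by
    have := monotoneOn_radialPotential hA ha hhc
      (fun s hs => by rw [hh s hs]; exact hpos _) (mem_Ici.2 le_rfl) (mem_Ici.2 hs) hs
    rw [radialPotential_zero] at this
    linarith
  refine ⟨fun r => U₀ + radialPotential A a h r, ⟨by simp,
    (contDiff_const.add (contDiff_radialPotential ha hhc)).contDiffOn, fun r hr => ?_⟩, ?_⟩
  · rw [← hfield h (fun r => U₀ + radialPotential A a h r) hpot hh r hr]
    exact (hasDerivAt_radialPotential ha hhc r).const_add U₀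
  rintro V ⟨hV₀, hVC, hVd⟩
  have hVmono : MonotoneOn V (Ici 0) := by
    refine monotoneOn_of_deriv_nonneg (convex_Ici 0) hVC.continuousOn ?_ ?_ <;>
      rw [interior_Ici]
    · exact fun r hr => (hVd r hr).differentiableAt.differentiableWithinAt
    · intro r hr
      have hr' : 0 < r := hr
      rw [(hVd r hr).deriv]
      refine mul_nonneg (by positivity) (intervalIntegral.integral_nonneg hr'.le fun s hs => ?_)
      exact mul_nonneg (rpow_nonneg hs.1 _) (integral_moment_nonneg hnonneg hvanish _)
  have hVU : ∀ s, 0 ≤ s → U₀ ≤ V s := fun s hs => by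
    simpa [hV₀] using hVmono (mem_Ici.2 le_rfl) (mem_Ici.2 hs) hs
  set f : ℝ → ℝ := fun s => truncMoment φ c E₀ p (V (max s 0)) with hf
  have hfc : Continuous f := hcont.comp <| hVC.continuousOn.comp_continuous
    (continuous_id.max continuous_const) fun s => mem_Ici.2 (le_max_right _ _)
  have hfV : ∀ s, 0 ≤ s → f s = truncMoment φ c E₀ p (V s) := fun s hs => by
    rw [hf]
    simp only [max_eq_left hs]
  have hVpot : ∀ r, 0 ≤ r → V r = U₀ + radialPotential A a f r := fun r hr => by
    have h1 := intervalIntegral.integral_eq_sub_of_hasDerivAt_of_le (f := V)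
      (f' := radialField A a f) hr (hVC.continuousOn.mono Icc_subset_Ici_self)
      (fun x hx => by rw [hfield f V hVU hfV x hx.1]; exact hVd x hx.1)
      ((continuous_radialField ha hfc).intervalIntegrable _ _)
    rw [radialPotential, h1, hV₀]
    ring
  intro r hr
  have huniq := source_unique_of_antitone hA ha hhc hfc hcont hanti hpos hzero hlip hh
    (fun s hs => by rw [hfV s hs, hVpot s hs]) hr
  rw [hVpot r hr, ← huniq]
end
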